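/- arXiv:2211.07196 — 4 statements merged into one kernel-verified Lean document; each statement's English description precedes it below -/
import Mathlib

section
/- Let n ≥ 1 be an integer. Then C(n,∞) = 2^{2n−1}·n!; that is, every f ∈ 𝒟ⁿ([0,1]) satisfies m_n(f) ≤ 2^{2n−1}·n! · sup_{t∈[0,1]} |f(t)|, and 2^{2n−1}·n! is the smallest constant with this property. -/
open Set Polynomial Nat MeasureTheory ENNReal

/-- `fd 0` belongs to `𝒟ⁿ([a,b])`, with `fd k` its `k`-th derivative: `fd k` exists and is
continuous on `[a,b]` for `0 ≤ k ≤ n-1`, and `fd n` is the derivative of `fd (n-1)` on `(a,b)`. -/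
def IsDn (n : ℕ) (a b : ℝ) (fd : ℕ → ℝ → ℝ) : Prop :=
  (∀ k, k + 1 < n → ∀ x ∈ Set.Icc a b, HasDerivWithinAt (fd k) (fd (k + 1) x) (Set.Icc a b) x) ∧
  ContinuousOn (fd (n - 1)) (Set.Icc a b) ∧
  (∀ x ∈ Set.Ioo a b, HasDerivAt (fd (n - 1)) (fd n x) x)

/-- `m_n(f) = inf_{a<t<b} |f^{(n)}(t)|`. -/
noncomputable def mIoo (n : ℕ) (a b : ℝ) (fd : ℕ → ℝ → ℝ) : ℝ :=
  sInf ((fun t => |fd n t|) '' Set.Ioo a b)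

/-- `‖f‖_{p,[a,b]}` for `0 < p < ∞`. -/
noncomputable def Lp (p a b : ℝ) (f : ℝ → ℝ) : ℝ :=
  (∫ t in a..b, |f t| ^ p) ^ (1 / p)

/-- `‖f‖_{∞,[a,b]}`. -/
noncomputable def Lsup (a b : ℝ) (f : ℝ → ℝ) : ℝ :=
  sSup ((fun t => |f t|) '' Set.Icc a b)

/-- `‖f‖_{p,[a,b]}` for `0 < p ≤ ∞`. -/
noncomputable def pnorm (p : ℝ≥0∞) (a b : ℝ) (f : ℝ → ℝ) : ℝ :=
  if p = ⊤ then Lsup a b f else Lp p.toReal a b f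

/-- `D**(n,p,[a,b])`, `p` finite. -/
noncomputable def Dstar (n : ℕ) (p a b : ℝ) : ℝ :=
  sInf { c | ∃ Q : Polynomial ℝ, Q.Monic ∧ Q.natDegree = n ∧ c = Lp p a b (fun x => Q.eval x) }

/-- `D**(n,∞,[a,b])`. -/
noncomputable def DstarInf (n : ℕ) (a b : ℝ) : ℝ :=
  sInf { c | ∃ Q : Polynomial ℝ, Q.Monic ∧ Q.natDegree = n ∧ c = Lsup a b (fun x => Q.eval x) }

/-- `C(n,p)`, `p` finite. -/
noncomputable def Cnp (n : ℕ) (p : ℝ) : ℝ :=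
  sSup { c | ∃ fd : ℕ → ℝ → ℝ, IsDn n 0 1 fd ∧ (∃ x ∈ Set.Icc (0:ℝ) 1, fd 0 x ≠ 0) ∧
    c = mIoo n 0 1 fd / Lp p 0 1 (fd 0) }

/-- `C(n,∞)`. -/
noncomputable def CnpInf (n : ℕ) : ℝ :=
  sSup { c | ∃ fd : ℕ → ℝ → ℝ, IsDn n 0 1 fd ∧ (∃ x ∈ Set.Icc (0:ℝ) 1, fd 0 x ≠ 0) ∧
    c = mIoo n 0 1 fd / Lsup 0 1 (fd 0) }


/-- Iterated Rolle theorem. -/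
theorem rolle_iter (n : ℕ) : ∀ (fd : ℕ → ℝ → ℝ) (a b : ℝ), IsDn (n + 1) a b fd →
    ∀ x : ℕ → ℝ, (∀ i ≤ n, x i < x (i + 1)) → (∀ i ≤ n + 1, x i ∈ Set.Icc a b) →
    (∀ i ≤ n + 1, fd 0 (x i) = 0) → ∃ c ∈ Set.Ioo a b, fd (n + 1) c = 0 := by
  induction n with
  | zero =>
    intro fd a b h x hx hm hz
    obtain ⟨-, hc, hd⟩ := h
    have m0 := hm 0 (by simp)
    have m1 := hm 1 (by simp)
    obtain ⟨c, hc1, hc2⟩ := exists_hasDerivAt_eq_zero (f := fd 0) (f' := fd 1) (hx 0 le_rfl)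
      (hc.mono (Set.Icc_subset_Icc m0.1 m1.2))
      (by rw [hz 0 (by simp), hz (0 + 1) (by simp)])
      (fun y hy => hd y ⟨lt_of_le_of_lt m0.1 hy.1, lt_of_lt_of_le hy.2 m1.2⟩)
    exact ⟨c, ⟨lt_of_le_of_lt m0.1 hc1.1, lt_of_lt_of_le hc1.2 m1.2⟩, hc2⟩
  | succ n ih =>
    intro fd a b h x hx hm hz
    obtain ⟨h1, h2, h3⟩ := h
    have key : ∀ i, ∃ c, i ≤ n + 1 → (c ∈ Set.Ioo (x i) (x (i + 1)) ∧ fd 1 c = 0) := by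
      intro i
      by_cases hi : i ≤ n + 1
      · have m0 := hm i (by omega)
        have m1 := hm (i + 1) (by omega)
        obtain ⟨c, hc1, hc2⟩ := exists_hasDerivAt_eq_zero (f := fd 0) (f' := fd 1) (hx i hi)
          (fun y hy => ((h1 0 (by omega) y
            ⟨m0.1.trans hy.1, hy.2.trans m1.2⟩).continuousWithinAt).mono
              (Set.Icc_subset_Icc m0.1 m1.2))
          (by rw [hz i (by omega), hz (i + 1) (by omega)])
          (fun y hy => (h1 0 (by omega) y
            ⟨m0.1.trans hy.1.le, hy.2.le.trans m1.2⟩).hasDerivAt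
              (Icc_mem_nhds (lt_of_le_of_lt m0.1 hy.1) (lt_of_lt_of_le hy.2 m1.2)))
        exact ⟨c, fun _ => ⟨hc1, hc2⟩⟩
      · exact ⟨0, fun h => absurd h hi⟩
    choose y hy using key
    exact ih (fun k => fd (k + 1)) a b ⟨fun k hk => h1 (k + 1) (by omega), h2, h3⟩ y
      (fun i hi => (hy i (by omega)).1.2.trans (hy (i + 1) (by omega)).1.1)
      (fun i hi => ⟨(hm i (by omega)).1.trans (hy i hi).1.1.le,
        (hy i hi).1.2.le.trans (hm (i + 1) (by omega)).2⟩)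
      (fun i hi => (hy i hi).2)

/-- Derivatives of `x ↦ P (2 x - 1)`. -/
noncomputable def polyD (P : Polynomial ℝ) (k : ℕ) (x : ℝ) : ℝ :=
  2 ^ k * (derivative^[k] P).eval (2 * x - 1)

theorem polyD_hasDerivAt (P : Polynomial ℝ) (k : ℕ) (x : ℝ) :
    HasDerivAt (polyD P k) (polyD P (k + 1) x) x := by
  have h1 : HasDerivAt (fun x : ℝ => 2 * x - 1) 2 x := by
    simpa using ((hasDerivAt_id x).const_mul 2).sub_const 1
  have h2 := ((derivative^[k] P).hasDerivAt (2 * x - 1)).comp x h1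
  have h3 := h2.const_mul (2 ^ k : ℝ)
  refine h3.congr_deriv ?_
  rw [polyD, Function.iterate_succ_apply']
  ring

theorem polyD_top (P : Polynomial ℝ) (n : ℕ) (h : P.natDegree ≤ n) (x : ℝ) :
    polyD P n x = 2 ^ n * ((n ! : ℝ) * P.coeff n) := by
  have h0 : (derivative^[n] P).natDegree = 0 := by
    have := natDegree_iterate_derivative P n
    omega
  rw [polyD, eq_C_of_natDegree_eq_zero h0, eval_C, coeff_iterate_derivative]
  simp [Nat.descFactorial_self]

theorem polyD_isDn (P : Polynomial ℝ) (n : ℕ) (hn : 1 ≤ n) : IsDn n 0 1 (polyD P) := by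
  refine ⟨fun k _ x _ => (polyD_hasDerivAt P k x).hasDerivWithinAt,
    fun x _ => (polyD_hasDerivAt P _ x).continuousAt.continuousWithinAt, fun x _ => ?_⟩
  have := polyD_hasDerivAt P (n - 1) x
  rwa [Nat.sub_add_cancel hn] at this

theorem IsDn.sub_polyD {n : ℕ} {fd : ℕ → ℝ → ℝ} (h : IsDn n 0 1 fd) (P : Polynomial ℝ)
    (hn : 1 ≤ n) : IsDn n 0 1 (fun k x => fd k x - polyD P k x) := by
  have h' := polyD_isDn P n hn
  exact ⟨fun k hk x hx => (h.1 k hk x hx).sub (h'.1 k hk x hx), h.2.1.sub h'.2.1,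
    fun x hx => (h.2.2 x hx).sub (h'.2.2 x hx)⟩

open Polynomial.Chebyshev in
theorem coeff_bound (n : ℕ) (P : Polynomial ℝ) (hP : P.degree < (n + 1 : ℕ)) (M : ℝ)
    (hM : ∀ i ≤ n, |P.eval (node n i)| ≤ M) : |P.coeff n| ≤ M * 2 ^ (n - 1) := by
  have inj := (strictAntiOn_node n).injOn
  have e1 := Lagrange.coeff_eq_sum inj (P := P) (by simpa using hP)
  have e2 := Lagrange.coeff_eq_sum inj (P := T ℝ n) (by
    rw [degree_T, Finset.card_range, Int.natAbs_natCast]; exact_mod_cast Nat.lt_succ_self n)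
  simp only [Finset.card_range, Nat.add_sub_cancel] at e1 e2
  have e3 : (T ℝ n).coeff n = 2 ^ (n - 1) := by
    trans (T ℝ n).leadingCoeff
    · simp [leadingCoeff]
    · simp
  rw [e1, ← e3, e2, Finset.mul_sum]
  refine (Finset.abs_sum_le_sum_abs _ _).trans (Finset.sum_le_sum fun i hi => ?_)
  have hi' : i ≤ n := Finset.mem_range_succ_iff.mp hi
  have hp := zero_lt_prod_node_sub_node hi'
  rw [eval_T_real_node (Finset.mem_Iic.mpr hi')]
  set D := ∏ j ∈ (Finset.range (n + 1)).erase i, (node n i - node n j)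
  have hD : (-1 : ℝ) ^ i / D = 1 / |D| := by
    rcases neg_one_pow_eq_or ℝ i with h | h
    · rw [h] at hp ⊢
      rw [abs_of_pos (by linarith)]
    · rw [h] at hp ⊢
      rw [abs_of_neg (by linarith), neg_div, div_neg]
  rw [hD, abs_div, mul_one_div]
  gcongr
  exact hM i hi'

/-- `C(n,∞) = 2^{2n-1} n!`: every `f ∈ 𝒟ⁿ([0,1])` satisfies
`m_n(f) ≤ 2^{2n-1} n! · sup_{[0,1]} |f|`, and this constant is smallest. -/
theorem stmt9 (n : ℕ) (hn : 1 ≤ n) :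
    (∀ fd : ℕ → ℝ → ℝ, IsDn n 0 1 fd →
      mIoo n 0 1 fd ≤ 2 ^ (2 * n - 1) * (n ! : ℝ) * Lsup 0 1 (fd 0)) ∧
    (∀ C : ℝ, (∀ fd : ℕ → ℝ → ℝ, IsDn n 0 1 fd →
        mIoo n 0 1 fd ≤ C * Lsup 0 1 (fd 0)) →
      (2 ^ (2 * n - 1) * (n ! : ℝ)) ≤ C) := by
  obtain ⟨m, rfl⟩ : ∃ m, n = m + 1 := ⟨n - 1, by omega⟩
  have hpow : (2 : ℝ) ^ (2 * (m + 1) - 1) = 2 ^ (m + 1) * 2 ^ (m + 1 - 1) := by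
    rw [← pow_add]; congr 1; omega
  constructor
  · intro fd h
    have hcont : ContinuousOn (fd 0) (Set.Icc 0 1) := by
      rcases Nat.eq_zero_or_pos m with rfl | hm
      · exact h.2.1
      · exact fun x hx => (h.1 0 (by omega) x hx).continuousWithinAt
    have hbdd : BddAbove ((fun t => |fd 0 t|) '' Set.Icc (0 : ℝ) 1) :=
      (isCompact_Icc.image_of_continuousOn hcont.abs).bddAbove
    have hle : ∀ t ∈ Set.Icc (0 : ℝ) 1, |fd 0 t| ≤ Lsup 0 1 (fd 0) := fun t ht =>
      le_csSup hbdd ⟨t, ht, rfl⟩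
    set r : ℕ → ℝ := fun i => fd 0 ((1 + Chebyshev.node (m + 1) i) / 2) with hr
    have inj := (Chebyshev.strictAntiOn_node (m + 1)).injOn
    set P := Lagrange.interpolate (Finset.range (m + 1 + 1)) (Chebyshev.node (m + 1)) r with hPd
    have hPdeg : P.degree < (m + 1 + 1 : ℕ) := by
      have := Lagrange.degree_interpolate_lt r inj
      simpa only [Finset.card_range] using this
    have hPe : ∀ i ≤ m + 1, P.eval (Chebyshev.node (m + 1) i) = r i := fun i hi =>
      Lagrange.eval_interpolate_at_node r inj (Finset.mem_range_succ_iff.mpr hi)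
    have hmem : ∀ i, (1 + Chebyshev.node (m + 1) i) / 2 ∈ Set.Icc (0 : ℝ) 1 := fun i => by
      have := Chebyshev.node_mem_Icc (n := m + 1) (i := i)
      constructor <;> linarith [this.1, this.2]
    have hco := coeff_bound (m + 1) P hPdeg (Lsup 0 1 (fd 0)) (fun i hi => by
      rw [hPe i hi]; exact hle _ (hmem i))
    have hnat : P.natDegree ≤ m + 1 := by
      by_cases h0 : P = 0
      · rw [h0]; simp
      · exact Nat.lt_succ_iff.mp ((natDegree_lt_iff_degree_lt h0).mpr hPdeg)
    obtain ⟨c, hc, hz⟩ := rolle_iter m _ 0 1 (h.sub_polyD P hn)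
      (fun i => (1 + Chebyshev.node (m + 1) (m + 1 - i)) / 2)
      (fun i hi => by
        have := Chebyshev.node_lt (n := m + 1) (i := m + 1 - (i + 1)) (j := m + 1 - i)
          (by omega) (by omega)
        linarith)
      (fun i _ => hmem _)
      (fun i _ => by
        have := hPe (m + 1 - i) (by omega)
        simp only [polyD, pow_zero, one_mul, Function.iterate_zero, id]
        rw [show 2 * ((1 + Chebyshev.node (m + 1) (m + 1 - i)) / 2) - 1
          = Chebyshev.node (m + 1) (m + 1 - i) by ring, this, hr]
        simp)
    have hfc : fd (m + 1) c = 2 ^ (m + 1) * (((m + 1)! : ℝ) * P.coeff (m + 1)) := by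
      rw [← polyD_top P (m + 1) hnat c]; linarith
    have h1 : mIoo (m + 1) 0 1 fd ≤ |fd (m + 1) c| :=
      csInf_le ⟨0, by rintro _ ⟨t, -, rfl⟩; exact abs_nonneg _⟩ ⟨c, hc, rfl⟩
    refine h1.trans ?_
    rw [hfc, abs_mul, abs_mul, abs_of_nonneg (by positivity : (0 : ℝ) ≤ 2 ^ (m + 1)),
      abs_of_nonneg (by positivity : (0 : ℝ) ≤ ((m + 1)! : ℝ)), hpow]
    calc (2 : ℝ) ^ (m + 1) * (((m + 1)! : ℝ) * |P.coeff (m + 1)|)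
        ≤ 2 ^ (m + 1) * (((m + 1)! : ℝ) * (Lsup 0 1 (fd 0) * 2 ^ (m + 1 - 1))) := by gcongr
      _ = _ := by ring
  · intro C hC
    have key := hC (polyD (Chebyshev.T ℝ ((m + 1 : ℕ) : ℤ))) (polyD_isDn _ _ hn)
    have e3 : (Chebyshev.T ℝ ((m + 1 : ℕ) : ℤ)).coeff (m + 1) = 2 ^ (m + 1 - 1) := by
      trans (Chebyshev.T ℝ ((m + 1 : ℕ) : ℤ)).leadingCoeff
      · rw [leadingCoeff, Chebyshev.natDegree_T, Int.natAbs_natCast]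
      · rw [Chebyshev.leadingCoeff_T, Int.natAbs_natCast]
    have hm : mIoo (m + 1) 0 1 (polyD (Chebyshev.T ℝ ((m + 1 : ℕ) : ℤ)))
        = 2 ^ (2 * (m + 1) - 1) * ((m + 1)! : ℝ) := by
      have : (fun t => |polyD (Chebyshev.T ℝ ((m + 1 : ℕ) : ℤ)) (m + 1) t|)
          = fun _ => 2 ^ (2 * (m + 1) - 1) * ((m + 1)! : ℝ) := by
        funext t
        rw [polyD_top _ _ (by rw [Chebyshev.natDegree_T, Int.natAbs_natCast]), e3, hpow,
          abs_of_nonneg (by positivity)]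
        ring
      rw [mIoo, this, Set.Nonempty.image_const (by simp), csInf_singleton]
    have hs : Lsup 0 1 (polyD (Chebyshev.T ℝ ((m + 1 : ℕ) : ℤ)) 0) = 1 := by
      refine IsGreatest.csSup_eq ⟨⟨1, by simp, ?_⟩, ?_⟩
      · simp only [polyD, pow_zero, one_mul, Function.iterate_zero, id]
        norm_num
      · rintro _ ⟨t, ht, rfl⟩
        simp only [polyD, pow_zero, one_mul, Function.iterate_zero, id]
        exact Chebyshev.abs_eval_T_real_le_one _
          (abs_le.mpr ⟨by linarith [ht.1], by linarith [ht.2]⟩)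
    rw [hm, hs, mul_one] at key
    exact key
end

section
/- Let n ≥ 1 be an integer. Then the function p ↦ D**(n,p,[0,1]) is strictly increasing on (0,∞]: if 0 < p < p′ ≤ ∞ then D**(n,p,[0,1]) < D**(n,p′,[0,1]). Equivalently, the function p ↦ C(n,p) is strictly decreasing on (0,∞]. -/
open Set Polynomial Nat MeasureTheory ENNReal

/-- Global `C^n` functions whose `(n+1)`-st derivative on `[0,1]` is at least `(n+1)!`
in the weak (increment) sense. -/
def MClass : ℕ → (ℝ → ℝ) → Prop
  | 0, f => Continuous f ∧ ∀ x ∈ Set.Icc (0:ℝ) 1, ∀ y ∈ Set.Icc (0:ℝ) 1, x ≤ y → y - x ≤ f y - f x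
  | (n+1), f => ∃ h, MClass n h ∧ ∀ x, HasDerivAt f (((n:ℝ) + 2) * h x) x

lemma MClass.continuous {n : ℕ} {f : ℝ → ℝ} (hf : MClass n f) : Continuous f := by
  cases n with
  | zero => exact hf.1
  | succ n =>
    obtain ⟨h, _, hd⟩ := hf
    exact continuous_iff_continuousAt.2 fun x => (hd x).continuousAt

lemma seg_mem {a x s : ℝ} (ha : a ∈ Set.Icc (0:ℝ) 1) (hx : x ∈ Set.Icc (0:ℝ) 1)
    (hs : s ∈ Set.Icc (0:ℝ) 1) : a + s * (x - a) ∈ Set.Icc (0:ℝ) 1 := by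
  obtain ⟨ha0, ha1⟩ := ha
  obtain ⟨hx0, hx1⟩ := hx
  obtain ⟨hs0, hs1⟩ := hs
  constructor <;> nlinarith

lemma hasDerivAt_T {f f' : ℝ → ℝ} (hf' : Continuous f') (hd : ∀ x, HasDerivAt f (f' x) x)
    (a : ℝ) (j : ℕ) (x₀ : ℝ) :
    HasDerivAt (fun x => ∫ s in (0:ℝ)..1, s ^ j * f (a + s * (x - a)))
      (∫ s in (0:ℝ)..1, s ^ (j+1) * f' (a + s * (x₀ - a))) x₀ := by
  have hf : Continuous f := continuous_iff_continuousAt.2 fun x => (hd x).continuousAt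
  have hcomp : IsCompact (Set.Icc (0:ℝ) 1 ×ˢ Metric.closedBall x₀ 1) :=
    isCompact_Icc.prod (isCompact_closedBall _ _)
  obtain ⟨B, hB⟩ := hcomp.exists_bound_of_continuousOn
    (f := fun q : ℝ × ℝ => q.1 ^ (j+1) * f' (a + q.1 * (q.2 - a))) (by fun_prop)
  refine (intervalIntegral.hasDerivAt_integral_of_dominated_loc_of_deriv_le (μ := volume)
    (F := fun x s => s ^ j * f (a + s * (x - a)))
    (F' := fun x s => s ^ (j+1) * f' (a + s * (x - a))) (bound := fun _ => B)
    (Metric.closedBall_mem_nhds x₀ one_pos) ?_ ?_ ?_ ?_ ?_ ?_).2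
  · refine Filter.Eventually.of_forall fun x => ?_
    exact Continuous.aestronglyMeasurable (by fun_prop)
  · exact Continuous.intervalIntegrable (by fun_prop) _ _
  · exact Continuous.aestronglyMeasurable (by fun_prop)
  · refine Filter.Eventually.of_forall fun s hs x hx => ?_
    rw [Set.uIoc_of_le zero_le_one] at hs
    exact hB (s, x) ⟨⟨hs.1.le, hs.2⟩, hx⟩
  · exact Continuous.intervalIntegrable (by fun_prop) _ _
  · refine Filter.Eventually.of_forall fun s hs x hx => ?_
    have h1 : HasDerivAt (fun x : ℝ => a + s * (x - a)) (s * 1) x :=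
      (((hasDerivAt_id x).sub_const a).const_mul s).const_add a
    have h2 := ((hd (a + s * (x - a))).comp x h1).const_mul (s ^ j)
    refine h2.congr_deriv ?_
    ring

lemma MClass.T {n : ℕ} : ∀ {h : ℝ → ℝ}, MClass n h → ∀ {a : ℝ}, a ∈ Set.Icc (0:ℝ) 1 → ∀ j : ℕ,
    MClass n (fun x => ((n:ℝ) + j + 2) * ∫ s in (0:ℝ)..1, s ^ j * h (a + s * (x - a))) := by
  induction n with
  | zero =>
    intro h hh a ha j
    have hc := hh.1
    refine ⟨?_, ?_⟩
    · refine continuous_const.mul ?_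
      exact intervalIntegral.continuous_parametric_intervalIntegral_of_continuous' (by fun_prop) _ _
    · intro x hx y hy hxy
      rw [← mul_sub, ← intervalIntegral.integral_sub
        (Continuous.intervalIntegrable (by fun_prop) _ _)
        (Continuous.intervalIntegrable (by fun_prop) _ _)]
      have key : (∫ s in (0:ℝ)..1, s ^ (j+1) * (y - x)) ≤ ∫ s in (0:ℝ)..1,
          (s ^ j * h (a + s * (y - a)) - s ^ j * h (a + s * (x - a))) := by
        refine intervalIntegral.integral_mono_on zero_le_one
          (Continuous.intervalIntegrable (by fun_prop) _ _)
          (Continuous.intervalIntegrable (by fun_prop) _ _) fun s hs => ?_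
        have := hh.2 _ (seg_mem ha hx hs) _ (seg_mem ha hy hs)
          (by nlinarith [mul_le_mul_of_nonneg_left hxy hs.1])
        have h3 := mul_le_mul_of_nonneg_left this (pow_nonneg hs.1 j)
        rw [pow_succ]
        linarith
      rw [intervalIntegral.integral_mul_const, integral_pow] at key
      have hj : (0:ℝ) < (j:ℝ) + 2 := by positivity
      have := mul_le_mul_of_nonneg_left key hj.le
      have h5 : ((j:ℝ) + 2) * ((1 ^ (j + 1 + 1) - 0 ^ (j + 1 + 1)) / (((j + 1 : ℕ):ℝ) + 1) * (y - x))
          = y - x := by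
        push_cast
        have : (j:ℝ) + 1 + 1 ≠ 0 := by positivity
        rw [one_pow, zero_pow (by omega)]
        field_simp
        ring
      rw [h5] at this
      simpa using this
  | succ n ih =>
    intro h hh a ha j
    obtain ⟨u, hu, hd⟩ := hh
    refine ⟨_, ih hu ha (j+1), fun x => ?_⟩
    have := (hasDerivAt_T (f' := fun x => ((n:ℝ) + 2) * u x)
      (continuous_const.mul hu.continuous) hd a j x).const_mul ((((n+1 : ℕ):ℝ)) + j + 2)
    refine this.congr_deriv ?_
    rw [show (fun s : ℝ => s ^ (j+1) * (((n:ℝ) + 2) * u (a + s * (x - a)))) =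
      fun s => ((n:ℝ) + 2) * (s ^ (j+1) * u (a + s * (x - a))) from by funext s; ring,
      intervalIntegral.integral_const_mul]
    push_cast
    ring

/-- subtracting a constant so that the function vanishes somewhere and shrinks pointwise -/
lemma exists_shift {f : ℝ → ℝ} (hf : Continuous f) :
    ∃ a ∈ Set.Icc (0:ℝ) 1, ∀ x ∈ Set.Icc (0:ℝ) 1, |f x - f a| ≤ |f x| := by
  by_cases hz : ∃ a ∈ Set.Icc (0:ℝ) 1, f a = 0
  · obtain ⟨a, ha, h0⟩ := hz
    exact ⟨a, ha, fun x _ => by simp [h0]⟩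
  · obtain ⟨a, ha, hmin⟩ := isCompact_Icc.exists_isMinOn (s := Set.Icc (0:ℝ) 1) ⟨0, by simp⟩
      (hf.abs.continuousOn)
    refine ⟨a, ha, fun x hx => ?_⟩
    have h1 : |f a| ≤ |f x| := hmin hx
    have hsign : 0 ≤ f a * f x := by
      by_contra hneg
      apply hz
      have hpre : IsPreconnected (Set.Icc (0:ℝ) 1) := isPreconnected_Icc
      rcases lt_or_ge (f a) 0 with h | h
      · have hx0 : 0 ≤ f x := by by_contra hh; exact hneg (mul_nonneg_of_nonpos_of_nonpos h.le (not_le.1 hh).le)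
        exact hpre.intermediate_value ha hx hf.continuousOn ⟨h.le, hx0⟩
      · have hx0 : f x ≤ 0 := by by_contra hh; exact hneg (mul_nonneg h (not_le.1 hh).le)
        exact hpre.intermediate_value hx ha hf.continuousOn ⟨hx0, h⟩
    rw [← sq_le_sq] at h1 ⊢
    have h2 : |f a| * |f a| ≤ f a * f x := by
      rw [← abs_of_nonneg hsign, abs_mul]
      exact mul_le_mul_of_nonneg_left (sq_le_sq.1 h1) (abs_nonneg _)
    rw [abs_mul_abs_self] at h2
    nlinarith

lemma MClass.exists_roots {n : ℕ} : ∀ {f : ℝ → ℝ}, MClass n f →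
    ∃ a : Fin (n+1) → ℝ, (∀ i, a i ∈ Set.Icc (0:ℝ) 1) ∧
      ∀ x ∈ Set.Icc (0:ℝ) 1, |∏ i, (x - a i)| ≤ |f x| := by
  induction n with
  | zero =>
    intro f hf
    obtain ⟨a, ha, hsh⟩ := exists_shift hf.1
    refine ⟨fun _ => a, fun _ => ha, fun x hx => ?_⟩
    refine le_trans ?_ (hsh x hx)
    simp only [Fin.prod_univ_succ, Finset.univ_eq_empty, Finset.prod_empty, mul_one]
    rcases le_total a x with h | h
    · have := hf.2 a ha x hx h
      exact abs_le_abs_of_nonneg (by linarith) this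
    · have := hf.2 x hx a ha h
      rw [abs_sub_comm x, abs_sub_comm (f x)]
      exact abs_le_abs_of_nonneg (by linarith) this
  | succ n ih =>
    intro f hf
    have hfc := hf.continuous
    obtain ⟨a, ha, hsh⟩ := exists_shift hfc
    obtain ⟨h, hh, hd⟩ := hf
    obtain ⟨b, hb, hbx⟩ := ih (hh.T ha 0)
    refine ⟨Fin.cons a b, ?_, fun x hx => ?_⟩
    · intro i
      refine Fin.cases ?_ (fun i => ?_) i
      · exact ha
      · exact hb i
    refine le_trans ?_ (hsh x hx)
    have hfx : f x - f a = (x - a) * (((n:ℝ) + (0:ℕ) + 2) *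
        ∫ s in (0:ℝ)..1, s ^ 0 * h (a + s * (x - a))) := by
      have hcont := hh.continuous
      have := intervalIntegral.integral_eq_sub_of_hasDerivAt (a := (0:ℝ)) (b := 1)
        (f := fun s => f (a + s * (x - a)))
        (f' := fun s => (((n:ℝ) + 2) * (x - a)) * h (a + s * (x - a)))
        (fun s _ => by
          have h1 : HasDerivAt (fun s : ℝ => a + s * (x - a)) (1 * (x - a)) s :=
            (((hasDerivAt_id s)).mul_const _).const_add a
          have h2 := ((hd (a + s * (x - a))).comp s h1)
          refine h2.congr_deriv ?_
          ring)
        (Continuous.intervalIntegrable (by fun_prop) _ _)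
      rw [intervalIntegral.integral_const_mul] at this
      simp only [one_mul, zero_mul, add_zero, add_sub_cancel] at this
      rw [← this]
      simp
      ring
    rw [hfx, Fin.prod_univ_succ, abs_mul, abs_mul]
    simp only [Fin.cons_zero, Fin.cons_succ]
    exact mul_le_mul_of_nonneg_left (hbx x hx) (abs_nonneg _)

lemma IsDn.exists_M {n : ℕ} : ∀ {fd : ℕ → ℝ → ℝ}, IsDn (n+1) 0 1 fd →
    (∀ x ∈ Set.Ioo (0:ℝ) 1, ((n+1).factorial : ℝ) ≤ fd (n+1) x) →
    ∃ F, MClass n F ∧ Set.EqOn F (fd 0) (Set.Icc 0 1) := by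
  induction n with
  | zero =>
    intro fd hfd hle
    obtain ⟨-, hc, hd⟩ := hfd
    simp only [zero_add, Nat.sub_self, Nat.factorial_one, Nat.cast_one] at hc hd hle
    have hE : Set.EqOn (Set.IccExtend (zero_le_one' ℝ) ((Set.Icc (0:ℝ) 1).domRestrict (fd 0))) (fd 0)
        (Set.Icc 0 1) := fun x hx => by
      rw [Set.IccExtend_of_mem _ _ hx]; rfl
    refine ⟨_, ⟨?_, ?_⟩, hE⟩
    · exact (continuousOn_iff_continuous_domRestrict.1 hc).Icc_extend'
    · intro x hx y hy hxy
      rw [hE hx, hE hy]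
      have := (convex_Icc (0:ℝ) 1).mul_sub_le_image_sub_of_le_deriv (C := 1) hc
        (by rw [interior_Icc]; exact fun x hx => (hd x hx).differentiableAt.differentiableWithinAt)
        (by rw [interior_Icc]; exact fun x hx => by rw [(hd x hx).deriv]; exact hle x hx)
        x hx y hy hxy
      simpa using this
  | succ n ih =>
    intro fd hfd hle
    obtain ⟨h1, hc, hd⟩ := hfd
    simp only [Nat.add_sub_cancel] at hc hd
    have hn : (0:ℝ) < (n:ℝ) + 2 := by positivity
    obtain ⟨h, hh, hE⟩ := ih (fd := fun k x => fd (k+1) x / ((n:ℝ) + 2)) (by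
      refine ⟨fun k hk x hx => ?_, ?_, fun x hx => ?_⟩
      · exact (h1 (k+1) (by omega) x hx).div_const _
      · exact hc.div_const _
      · exact (hd x hx).div_const _) (by
      intro x hx
      have := hle x hx
      rw [Nat.factorial_succ] at this
      push_cast at this
      show _ ≤ fd (n+1+1) x / ((n:ℝ) + 2)
      rw [le_div_iff₀ hn]
      linarith)
    have hcont := hh.continuous
    refine ⟨fun x => fd 0 0 + ∫ t in (0:ℝ)..x, ((n:ℝ) + 2) * h t, ⟨h, hh, fun x => ?_⟩, fun x hx => ?_⟩
    · have hc2 : Continuous fun t => ((n:ℝ) + 2) * h t := by fun_prop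
      exact (intervalIntegral.integral_hasDerivAt_right (hc2.intervalIntegrable _ _)
        (hc2.stronglyMeasurableAtFilter _ _) hc2.continuousAt).const_add _
    · have hsub : Set.Icc 0 x ⊆ Set.Icc (0:ℝ) 1 := Set.Icc_subset_Icc_right hx.2
      have := intervalIntegral.integral_eq_sub_of_hasDerivAt_of_le (a := (0:ℝ)) (b := x)
        (f := fd 0) (f' := fun t => ((n:ℝ) + 2) * h t) hx.1
        (fun t ht => (h1 0 (by omega) t (hsub ht)).continuousWithinAt.mono hsub)
        (fun t ht => by
          have ht' : t ∈ Set.Ioo (0:ℝ) 1 := ⟨ht.1, ht.2.trans_le hx.2⟩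
          have h3 := (h1 0 (by omega) t (Set.Ioo_subset_Icc_self ht')).hasDerivAt
            (Icc_mem_nhds ht'.1 ht'.2)
          rw [hE (Set.Ioo_subset_Icc_self ht')]
          refine h3.congr_deriv ?_
          show _ = ((n:ℝ) + 2) * (fd (0+1) t / ((n:ℝ) + 2))
          field_simp)
        (Continuous.intervalIntegrable (by fun_prop) _ _)
      show fd 0 0 + _ = _
      rw [this]
      ring

/-- product polynomial -/
noncomputable def prodFn {n : ℕ} (a : Fin (n+1) → ℝ) (x : ℝ) : ℝ := ∏ i, (x - a i)

/-- the parameter box -/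
def Box (n : ℕ) : Set (Fin (n+1) → ℝ) := Set.univ.pi fun _ => Set.Icc (0:ℝ) 1

lemma prodFn_continuous {n : ℕ} (a : Fin (n+1) → ℝ) : Continuous (prodFn a) := by
  unfold prodFn; fun_prop

lemma Lp_mono {p : ℝ} (hp : 0 < p) {f g : ℝ → ℝ} (hf : ContinuousOn f (Set.Icc 0 1))
    (hg : ContinuousOn g (Set.Icc 0 1)) (h : ∀ x ∈ Set.Icc (0:ℝ) 1, |f x| ≤ |g x|) :
    Lp p 0 1 f ≤ Lp p 0 1 g := by
  unfold _root_.Lp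
  refine Real.rpow_le_rpow ?_ ?_ (by positivity)
  · exact intervalIntegral.integral_nonneg zero_le_one fun x _ => by positivity
  · refine intervalIntegral.integral_mono_on zero_le_one ?_ ?_ fun x hx => ?_
    · refine ContinuousOn.intervalIntegrable ?_
      rw [Set.uIcc_of_le zero_le_one]
      exact hf.abs.rpow_const fun _ _ => Or.inr hp.le
    · refine ContinuousOn.intervalIntegrable ?_
      rw [Set.uIcc_of_le zero_le_one]
      exact hg.abs.rpow_const fun _ _ => Or.inr hp.le
    · exact Real.rpow_le_rpow (abs_nonneg _) (h x hx) hp.le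

lemma Lp_nonneg (p : ℝ) (f : ℝ → ℝ) : 0 ≤ Lp p 0 1 f := by
  unfold _root_.Lp
  exact Real.rpow_nonneg (intervalIntegral.integral_nonneg zero_le_one fun x _ => by positivity) _

lemma Lp_const_mul {p : ℝ} (hp : 0 < p) {c : ℝ} (hc : 0 ≤ c) (f : ℝ → ℝ) :
    Lp p 0 1 (fun x => c * f x) = c * Lp p 0 1 f := by
  unfold _root_.Lp
  have : (fun t => |c * f t| ^ p) = fun t => c ^ p * |f t| ^ p := by
    funext t
    rw [abs_mul, Real.mul_rpow (abs_nonneg _) (abs_nonneg _), abs_of_nonneg hc]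
  rw [this, intervalIntegral.integral_const_mul, Real.mul_rpow (by positivity)
    (intervalIntegral.integral_nonneg zero_le_one fun x _ => by positivity),
    ← Real.rpow_mul hc, mul_one_div_cancel hp.ne', Real.rpow_one]

lemma Lp_le_Lsup {p : ℝ} (hp : 0 < p) {f : ℝ → ℝ} (hf : ContinuousOn f (Set.Icc 0 1)) :
    Lp p 0 1 f ≤ Lsup 0 1 f := by
  have hbdd : BddAbove ((fun t => |f t|) '' Set.Icc 0 1) :=
    (isCompact_Icc.image_of_continuousOn hf.abs).bddAbove
  have hle : ∀ x ∈ Set.Icc (0:ℝ) 1, |f x| ≤ Lsup 0 1 f := fun x hx =>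
    le_csSup hbdd ⟨x, hx, rfl⟩
  have h0 : 0 ≤ Lsup 0 1 f := (abs_nonneg _).trans (hle 0 (by simp))
  have := Lp_mono hp hf (continuousOn_const (c := Lsup 0 1 f)) fun x hx => by
    rw [abs_of_nonneg h0]; exact hle x hx
  refine this.trans (le_of_eq ?_)
  unfold _root_.Lp
  rw [intervalIntegral.integral_const, abs_of_nonneg h0, sub_zero, one_smul, ← Real.rpow_mul h0,
    mul_one_div_cancel hp.ne', Real.rpow_one]

lemma integral_pos_prod {n : ℕ} (a : Fin (n+1) → ℝ) {p : ℝ} (hp : 0 < p) :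
    0 < ∫ t in (0:ℝ)..1, |prodFn a t| ^ p := by
  refine intervalIntegral.integral_pos one_pos ?_ (fun x _ => by positivity) ?_
  · exact ((prodFn_continuous a).abs.rpow_const fun _ => Or.inr hp.le).continuousOn
  · have hinf : (Set.Icc (0:ℝ) 1).Infinite := Set.Icc_infinite one_pos
    obtain ⟨c, hc, hca⟩ := hinf.exists_notMem_finite (Set.finite_range a)
    refine ⟨c, hc, Real.rpow_pos_of_pos (abs_pos.2 ?_) _⟩
    refine Finset.prod_ne_zero_iff.2 fun i _ h => hca ⟨i, ?_⟩
    linarith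

lemma Lp_prod_pos {n : ℕ} (a : Fin (n+1) → ℝ) {p : ℝ} (hp : 0 < p) : 0 < Lp p 0 1 (prodFn a) :=
  Real.rpow_pos_of_pos (integral_pos_prod a hp) _

lemma Lp_prod_strict {n : ℕ} {a : Fin (n+1) → ℝ} (ha : a ∈ Box n) {p p' : ℝ} (hp : 0 < p)
    (hpp : p < p') : Lp p 0 1 (prodFn a) < Lp p' 0 1 (prodFn a) := by
  have hp' : 0 < p' := hp.trans hpp
  have hA := integral_pos_prod a hp
  set A := ∫ t in (0:ℝ)..1, |prodFn a t| ^ p with hAdef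
  have hr : 1 < p' / p := (one_lt_div hp).2 hpp
  have hr0 : 0 < p' / p := by positivity
  have hc : Continuous fun t => |prodFn a t| ^ p :=
    (prodFn_continuous a).abs.rpow_const fun _ => Or.inr hp.le
  have hc' : Continuous fun t => |prodFn a t| ^ p' :=
    (prodFn_continuous a).abs.rpow_const fun _ => Or.inr hp'.le
  have hpow : ∀ t, (1 + (|prodFn a t| ^ p / A - 1)) ^ (p' / p) = |prodFn a t| ^ p' / A ^ (p' / p) := by
    intro t
    rw [add_sub_cancel, Real.div_rpow (by positivity) hA.le, ← Real.rpow_mul (abs_nonneg _),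
      mul_div_cancel₀ _ hp.ne']
  have hlt : (∫ t in (0:ℝ)..1, (1 + (p' / p) * (|prodFn a t| ^ p / A - 1))) <
      ∫ t in (0:ℝ)..1, |prodFn a t| ^ p' / A ^ (p' / p) := by
    refine intervalIntegral.integral_lt_integral_of_continuousOn_of_le_of_exists_lt one_pos
      (Continuous.continuousOn (by fun_prop)) (Continuous.continuousOn (by fun_prop))
      (fun t _ => ?_) ⟨a 0, ha 0 trivial, ?_⟩
    · rw [← hpow]
      refine one_add_mul_self_le_rpow_one_add ?_ hr.le
      have : 0 ≤ |prodFn a t| ^ p / A := by positivity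
      linarith
    · rw [← hpow]
      have h0 : prodFn a (a 0) = 0 := Finset.prod_eq_zero (Finset.mem_univ 0) (sub_self _)
      have : |prodFn a (a 0)| ^ p / A = 0 := by rw [h0, abs_zero, Real.zero_rpow hp.ne', zero_div]
      rw [this]
      exact one_add_mul_self_lt_rpow_one_add (by norm_num) (by norm_num) hr
  have hL : (∫ t in (0:ℝ)..1, (1 + (p' / p) * (|prodFn a t| ^ p / A - 1))) = 1 := by
    rw [intervalIntegral.integral_add (Continuous.intervalIntegrable (by fun_prop) _ _)
      (Continuous.intervalIntegrable (by fun_prop) _ _), intervalIntegral.integral_const_mul,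
      intervalIntegral.integral_sub (Continuous.intervalIntegrable (by fun_prop) _ _)
      (Continuous.intervalIntegrable (by fun_prop) _ _), intervalIntegral.integral_div, ← hAdef,
      div_self hA.ne']
    simp
  rw [hL, intervalIntegral.integral_div, lt_div_iff₀ (by positivity), one_mul] at hlt
  unfold _root_.Lp
  rw [← hAdef]
  have := Real.rpow_lt_rpow (by positivity) hlt (show 0 < 1 / p' by positivity)
  rw [← Real.rpow_mul hA.le] at this
  rwa [show p' / p * (1 / p') = 1 / p from by field_simp] at this

lemma exists_min (n : ℕ) {p : ℝ} (hp : 0 < p) :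
    ∃ a ∈ Box n, ∀ b ∈ Box n, Lp p 0 1 (prodFn a) ≤ Lp p 0 1 (prodFn b) := by
  have hK : IsCompact (Box n) := isCompact_univ_pi fun _ => isCompact_Icc
  have hcont : Continuous fun a : Fin (n+1) → ℝ => Lp p 0 1 (prodFn a) := by
    unfold _root_.Lp
    refine Continuous.rpow_const ?_ fun _ => Or.inr (by positivity)
    refine intervalIntegral.continuous_parametric_intervalIntegral_of_continuous' ?_ _ _
    unfold Function.uncurry prodFn
    refine Continuous.rpow_const ?_ fun _ => Or.inr hp.le
    fun_prop
  obtain ⟨a, ha, hmin⟩ := hK.exists_isMinOn ⟨fun _ => 0, fun _ _ => by simp⟩ hcont.continuousOn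
  exact ⟨a, ha, fun b hb => hmin hb⟩

lemma IsDn.continuousOn {n : ℕ} {fd : ℕ → ℝ → ℝ} (h : IsDn (n+1) 0 1 fd) :
    ContinuousOn (fd 0) (Set.Icc 0 1) := by
  cases n with
  | zero => exact h.2.1
  | succ n => exact fun x hx => (h.1 0 (by omega) x hx).continuousWithinAt

lemma IsDn.smul {n : ℕ} {fd : ℕ → ℝ → ℝ} (h : IsDn (n+1) 0 1 fd) (c : ℝ) :
    IsDn (n+1) 0 1 (fun k x => c * fd k x) :=
  ⟨fun k hk x hx => (h.1 k hk x hx).const_mul c, continuousOn_const.mul h.2.1,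
    fun x hx => (h.2.2 x hx).const_mul c⟩

lemma mIoo_nonneg (n : ℕ) (fd : ℕ → ℝ → ℝ) : 0 ≤ mIoo n 0 1 fd := by
  refine Real.sInf_nonneg ?_
  rintro _ ⟨t, _, rfl⟩
  exact abs_nonneg _

lemma IsDn.exists_prod {n : ℕ} {fd : ℕ → ℝ → ℝ} (h : IsDn (n+1) 0 1 fd)
    (hm : 0 < mIoo (n+1) 0 1 fd) :
    ∃ a ∈ Box n, ∀ x ∈ Set.Icc (0:ℝ) 1,
      |mIoo (n+1) 0 1 fd / (n+1).factorial * prodFn a x| ≤ |fd 0 x| := by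
  set m := mIoo (n+1) 0 1 fd with hmdef
  have hfac : (0:ℝ) < ((n+1).factorial : ℝ) := by positivity
  have hge : ∀ x ∈ Set.Ioo (0:ℝ) 1, m ≤ |fd (n+1) x| := fun x hx =>
    csInf_le ⟨0, by rintro _ ⟨t, _, rfl⟩; exact abs_nonneg _⟩ ⟨x, hx, rfl⟩
  have hsign : ∃ e : ℝ, |e| = 1 ∧ ∀ x ∈ Set.Ioo (0:ℝ) 1, m ≤ e * fd (n+1) x := by
    rcases hasDerivWithinAt_forall_lt_or_forall_gt_of_forall_ne (convex_Ioo (0:ℝ) 1)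
      (fun x hx => (h.2.2 x hx).hasDerivWithinAt) (m := 0)
      (fun x hx h0 => by have := hge x hx; rw [h0, abs_zero] at this; linarith) with hs | hs
    · refine ⟨-1, by simp, fun x hx => ?_⟩
      have := hge x hx
      rw [abs_of_neg (hs x hx)] at this
      linarith
    · refine ⟨1, by simp, fun x hx => ?_⟩
      have := hge x hx
      rw [abs_of_pos (hs x hx)] at this
      linarith
  obtain ⟨e, he, hem⟩ := hsign
  obtain ⟨F, hF, hFE⟩ := (h.smul (((n+1).factorial : ℝ) / m * e)).exists_M (by
    intro x hx
    have := mul_le_mul_of_nonneg_left (hem x hx) (div_pos hfac hm).le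
    rw [div_mul_cancel₀ _ hm.ne'] at this
    rwa [mul_assoc])
  obtain ⟨a, ha, hax⟩ := hF.exists_roots
  refine ⟨a, fun i _ => ha i, fun x hx => ?_⟩
  have h1 := hax x hx
  rw [hFE hx, abs_mul, abs_mul, he, mul_one, abs_of_pos (div_pos hfac hm)] at h1
  rw [abs_mul, abs_of_pos (div_pos hm hfac)]
  have h2 := mul_le_mul_of_nonneg_left h1 (div_pos hm hfac).le
  have h3 : m / ((n+1).factorial : ℝ) * (((n+1).factorial : ℝ) / m * |fd 0 x|) = |fd 0 x| := by
    field_simp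
  rwa [h3] at h2

lemma poly_isDn (Q : Polynomial ℝ) (n : ℕ) :
    IsDn (n+1) 0 1 (fun k x => (Polynomial.derivative^[k] Q).eval x) := by
  have hd : ∀ k x, HasDerivAt (fun x => (Polynomial.derivative^[k] Q).eval x)
      ((Polynomial.derivative^[k+1] Q).eval x) x := fun k x => by
    rw [Function.iterate_succ_apply']
    exact Polynomial.hasDerivAt _ _
  exact ⟨fun k _ x _ => (hd k x).hasDerivWithinAt, (Polynomial.continuous _).continuousOn,
    fun x _ => hd n x⟩

lemma poly_mIoo {Q : Polynomial ℝ} {n : ℕ} (hQ : Q.Monic) (hn : Q.natDegree = n) :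
    mIoo n 0 1 (fun k x => (Polynomial.derivative^[k] Q).eval x) = n.factorial := by
  have hc : Polynomial.derivative^[n] Q = Polynomial.C (n.factorial : ℝ) := by
    have hdeg : (Polynomial.derivative^[n] Q).natDegree ≤ 0 :=
      (Polynomial.natDegree_iterate_derivative Q n).trans (by omega)
    rw [Polynomial.eq_C_of_natDegree_le_zero hdeg, Polynomial.coeff_iterate_derivative]
    have h1 : Q.coeff n = 1 := by rw [← hn]; exact hQ
    simp [h1, Nat.descFactorial_self]
  unfold mIoo
  simp only [hc, Polynomial.eval_C]
  have hne : (Set.Ioo (0:ℝ) 1).Nonempty := ⟨1/2, by norm_num, by norm_num⟩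
  rw [hne.image_const, csInf_singleton]
  exact abs_of_nonneg (by positivity)

/-- the monic polynomial with prescribed roots -/
noncomputable def prodPoly {n : ℕ} (a : Fin (n+1) → ℝ) : Polynomial ℝ :=
  ∏ i, (Polynomial.X - Polynomial.C (a i))

lemma prodPoly_monic {n : ℕ} (a : Fin (n+1) → ℝ) : (prodPoly a).Monic :=
  Polynomial.monic_prod_of_monic _ _ fun _ _ => Polynomial.monic_X_sub_C _

lemma prodPoly_natDegree {n : ℕ} (a : Fin (n+1) → ℝ) : (prodPoly a).natDegree = n + 1 := by
  unfold prodPoly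
  rw [Polynomial.natDegree_prod_of_monic _ _ fun _ _ => Polynomial.monic_X_sub_C _]
  simp

lemma prodPoly_eval {n : ℕ} (a : Fin (n+1) → ℝ) :
    (fun x => (prodPoly a).eval x) = prodFn a := by
  funext x
  simp [prodPoly, prodFn, Polynomial.eval_prod]

lemma poly_exists_prod {Q : Polynomial ℝ} {n : ℕ} (hQ : Q.Monic) (hn : Q.natDegree = n + 1) :
    ∃ a ∈ Box n, ∀ x ∈ Set.Icc (0:ℝ) 1, |prodFn a x| ≤ |Q.eval x| := by
  have hm := poly_mIoo hQ hn
  have hfac : (0:ℝ) < ((n+1).factorial : ℝ) := by positivity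
  obtain ⟨a, ha, hax⟩ := (poly_isDn Q n).exists_prod (by rw [hm]; exact hfac)
  refine ⟨a, ha, fun x hx => ?_⟩
  have := hax x hx
  rw [hm, div_self hfac.ne', one_mul] at this
  exact this

lemma Dstar_spec (n : ℕ) {p : ℝ} (hp : 0 < p) :
    ∃ a ∈ Box n, Dstar (n+1) p 0 1 = Lp p 0 1 (prodFn a) ∧
      ∀ b ∈ Box n, Lp p 0 1 (prodFn a) ≤ Lp p 0 1 (prodFn b) := by
  obtain ⟨a, ha, hmin⟩ := exists_min n hp
  refine ⟨a, ha, IsLeast.csInf_eq ⟨?_, ?_⟩, hmin⟩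
  · exact ⟨prodPoly a, prodPoly_monic a, prodPoly_natDegree a, by rw [prodPoly_eval]⟩
  · rintro _ ⟨Q, hQ, hn, rfl⟩
    obtain ⟨b, hb, hbx⟩ := poly_exists_prod hQ hn
    exact (hmin b hb).trans (Lp_mono hp (prodFn_continuous b).continuousOn
      Q.continuous.continuousOn hbx)

lemma Dstar_pos (n : ℕ) {p : ℝ} (hp : 0 < p) : 0 < Dstar (n+1) p 0 1 := by
  obtain ⟨a, _, h, _⟩ := Dstar_spec n hp
  rw [h]
  exact Lp_prod_pos a hp

lemma Dstar_strict (n : ℕ) {p p' : ℝ} (hp : 0 < p) (hpp : p < p') :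
    Dstar (n+1) p 0 1 < Dstar (n+1) p' 0 1 := by
  obtain ⟨a, _, h, hmin⟩ := Dstar_spec n hp
  obtain ⟨a', ha', h', _⟩ := Dstar_spec n (hp.trans hpp)
  rw [h, h']
  exact (hmin a' ha').trans_lt (Lp_prod_strict ha' hp hpp)

lemma Dstar_le_inf (n : ℕ) {p : ℝ} (hp : 0 < p) :
    Dstar (n+1) p 0 1 ≤ DstarInf (n+1) 0 1 := by
  obtain ⟨a, _, h, hmin⟩ := Dstar_spec n hp
  rw [h]
  refine le_csInf ⟨_, prodPoly a, prodPoly_monic a, prodPoly_natDegree a, rfl⟩ ?_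
  rintro _ ⟨Q, hQ, hn, rfl⟩
  obtain ⟨b, hb, hbx⟩ := poly_exists_prod hQ hn
  exact ((hmin b hb).trans (Lp_mono hp (prodFn_continuous b).continuousOn
      Q.continuous.continuousOn hbx)).trans (Lp_le_Lsup hp Q.continuous.continuousOn)

lemma mIoo_bound {n : ℕ} {p : ℝ} (hp : 0 < p) {fd : ℕ → ℝ → ℝ} (h : IsDn (n+1) 0 1 fd) :
    mIoo (n+1) 0 1 fd * Dstar (n+1) p 0 1 ≤ (n+1).factorial * Lp p 0 1 (fd 0) := by
  have hfac : (0:ℝ) < ((n+1).factorial : ℝ) := by positivity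
  rcases (mIoo_nonneg (n+1) fd).eq_or_lt with h0 | h0
  · rw [← h0, zero_mul]
    exact mul_nonneg hfac.le (Lp_nonneg _ _)
  · obtain ⟨b, hb, hbx⟩ := h.exists_prod h0
    obtain ⟨a, _, hD, hmin⟩ := Dstar_spec n hp
    have h1 := Lp_mono (f := fun x => mIoo (n+1) 0 1 fd / (n+1).factorial * prodFn b x) hp (continuousOn_const.mul (prodFn_continuous b).continuousOn)
      h.continuousOn hbx
    rw [Lp_const_mul hp (div_pos h0 hfac).le, div_mul_eq_mul_div, div_le_iff₀ hfac] at h1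
    rw [hD]
    have := mul_le_mul_of_nonneg_left (hmin b hb) h0.le
    linarith

lemma ratio_le {m D F L : ℝ} (hD : 0 < D) (hF : 0 ≤ F) (hL : 0 ≤ L) (h : m * D ≤ F * L) :
    m / L ≤ F / D := by
  rcases hL.eq_or_lt with h0 | h0
  · rw [← h0, _root_.div_zero]; positivity
  · rw [div_le_div_iff₀ h0 hD]; exact h

lemma Cnp_eq (n : ℕ) {p : ℝ} (hp : 0 < p) :
    Cnp (n+1) p = (n+1).factorial / Dstar (n+1) p 0 1 := by
  have hD := Dstar_pos n hp
  refine IsGreatest.csSup_eq ⟨?_, ?_⟩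
  · obtain ⟨a, _, h, _⟩ := Dstar_spec n hp
    refine ⟨_, poly_isDn (prodPoly a) n, ?_, ?_⟩
    · obtain ⟨c, hc, hca⟩ := (Set.Icc_infinite (zero_lt_one' ℝ)).exists_notMem_finite
        (Set.finite_range a)
      refine ⟨c, hc, ?_⟩
      have := congrFun (prodPoly_eval a) c
      show (prodPoly a).eval c ≠ 0
      rw [this]
      refine Finset.prod_ne_zero_iff.2 fun i _ h => hca ⟨i, ?_⟩
      linarith
    · rw [poly_mIoo (prodPoly_monic a) (prodPoly_natDegree a), h, ← prodPoly_eval]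
      rfl
  · rintro _ ⟨fd, hfd, _, rfl⟩
    exact ratio_le hD (by positivity) (Lp_nonneg _ _) (mIoo_bound hp hfd)

lemma CnpInf_le (n : ℕ) {p : ℝ} (hp : 0 < p) : CnpInf (n+1) ≤ Cnp (n+1) p := by
  have hD := Dstar_pos n hp
  rw [Cnp_eq n hp]
  refine Real.sSup_le ?_ (by positivity)
  rintro _ ⟨fd, hfd, _, rfl⟩
  have h1 := Lp_le_Lsup hp hfd.continuousOn
  refine ratio_le hD (by positivity) ((Lp_nonneg _ _).trans h1) ((mIoo_bound hp hfd).trans ?_)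
  exact mul_le_mul_of_nonneg_left h1 (by positivity)

lemma Cnp_strict (n : ℕ) {p p' : ℝ} (hp : 0 < p) (hpp : p < p') :
    Cnp (n+1) p' < Cnp (n+1) p := by
  rw [Cnp_eq n hp, Cnp_eq n (hp.trans hpp)]
  exact div_lt_div_of_pos_left (by positivity) (Dstar_pos n hp) (Dstar_strict n hp hpp)

/-- `p ↦ D**(n,p,[0,1])` is strictly increasing on `(0,∞]`; equivalently `p ↦ C(n,p)` is
strictly decreasing on `(0,∞]`. -/
theorem stmt14 (n : ℕ) (hn : 1 ≤ n) :
    (∀ p p' : ℝ, 0 < p → p < p' → Dstar n p 0 1 < Dstar n p' 0 1) ∧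
    (∀ p : ℝ, 0 < p → Dstar n p 0 1 < DstarInf n 0 1) ∧
    (∀ p p' : ℝ, 0 < p → p < p' → Cnp n p' < Cnp n p) ∧
    (∀ p : ℝ, 0 < p → CnpInf n < Cnp n p) := by
  obtain ⟨n, rfl⟩ : ∃ k, n = k + 1 := ⟨n - 1, by omega⟩
  refine ⟨fun p p' hp hpp => Dstar_strict n hp hpp, fun p hp => ?_,
    fun p p' hp hpp => Cnp_strict n hp hpp, fun p hp => ?_⟩
  · exact (Dstar_strict n hp (lt_add_one p)).trans_le (Dstar_le_inf n (by linarith))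
  · exact (CnpInf_le n (by linarith)).trans_lt (Cnp_strict n hp (lt_add_one p))
end

section
/- Let n ≥ 1 be an integer and let 1 < p < ∞. Then 2^{2n−1}·n! < C(n,p) < 2^{2n}·n!. -/
open Set Polynomial Nat MeasureTheory ENNReal

/-- shifted Chebyshev polynomials of the second kind -/
noncomputable def VV (k : ℕ) : ℝ[X] := (Chebyshev.U ℝ k).comp (2 * X - 1)

lemma VV_eval (k : ℕ) (t : ℝ) : (VV k).eval t = (Chebyshev.U ℝ k).eval (2 * t - 1) := by
  simp [VV]

lemma lin_eq : (2 * X - 1 : ℝ[X]) = C 2 * X + C (-1) := by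
  simp [sub_eq_add_neg]; rfl

lemma natDegree_lin : (2 * X - 1 : ℝ[X]).natDegree = 1 := by
  rw [lin_eq]; exact natDegree_linear (by norm_num)

lemma leadingCoeff_lin : (2 * X - 1 : ℝ[X]).leadingCoeff = 2 := by
  rw [lin_eq]; exact leadingCoeff_linear (by norm_num)

lemma VV_natDegree (k : ℕ) : (VV k).natDegree = k := by
  rw [VV, natDegree_comp, natDegree_lin, Chebyshev.natDegree_U_natCast, mul_one]

lemma VV_leadingCoeff (k : ℕ) : (VV k).leadingCoeff = 2 ^ (2 * k) := by
  rw [VV, leadingCoeff_comp (by rw [natDegree_lin]; norm_num), leadingCoeff_lin,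
    Chebyshev.natDegree_U_natCast, Chebyshev.leadingCoeff_U_natCast, two_mul, pow_add]

lemma VV_ne_zero (k : ℕ) : VV k ≠ 0 := by
  intro h
  have := VV_leadingCoeff k
  rw [h] at this
  simp at this
  exact absurd this.symm (by positivity)

noncomputable def VVseq : Polynomial.Sequence ℝ where
  elems' n := VV n
  degree_eq' n := by rw [degree_eq_natDegree (VV_ne_zero n), VV_natDegree]

noncomputable def yy (n i : ℕ) : ℝ := (1 + Real.cos (i * Real.pi / (n + 1))) / 2

noncomputable def sg (n : ℕ) (t : ℝ) : ℝ := if 0 < (VV n).eval t then 1 else -1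

lemma sg_measurable (n : ℕ) : Measurable (sg n) := by
  unfold sg
  refine Measurable.ite ?_ measurable_const measurable_const
  exact measurableSet_lt measurable_const (VV n).continuous.measurable

lemma sg_abs (n : ℕ) (t : ℝ) : |sg n t| = 1 := by unfold sg; split_ifs <;> simp

lemma sg_sq (n : ℕ) (t : ℝ) : sg n t * sg n t = 1 := by unfold sg; split_ifs <;> simp

lemma sg_mul_VV (n : ℕ) (t : ℝ) : sg n t * (VV n).eval t = |(VV n).eval t| := by
  unfold sg; split_ifs with h
  · rw [abs_of_pos h, one_mul]
  · rw [abs_of_nonpos (not_lt.1 h), neg_one_mul]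

lemma sg_mul_intervalIntegrable (n : ℕ) {f : ℝ → ℝ} {a b : ℝ} (hf : IntervalIntegrable f volume a b) :
    IntervalIntegrable (fun t => sg n t * f t) volume a b := by
  constructor
  · exact hf.1.bdd_mul (c := 1) (sg_measurable n).aestronglyMeasurable
      (Filter.Eventually.of_forall fun t => by rw [Real.norm_eq_abs, sg_abs])
  · exact hf.2.bdd_mul (c := 1) (sg_measurable n).aestronglyMeasurable
      (Filter.Eventually.of_forall fun t => by rw [Real.norm_eq_abs, sg_abs])

lemma yy_zero (n : ℕ) : yy n 0 = 1 := by simp [yy]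
lemma yy_last (n : ℕ) : yy n (n+1) = 0 := by
  have : ((n:ℝ)+1) * Real.pi / (n+1) = Real.pi := by field_simp
  simp [yy, this]

lemma yy_lt (n : ℕ) {i j : ℕ} (hij : i < j) (hj : j ≤ n + 1) : yy n j < yy n i := by
  unfold yy
  have hi' : (i:ℝ) < j := by exact_mod_cast hij
  have hj' : (j:ℝ) ≤ n + 1 := by exact_mod_cast hj
  have := Real.pi_pos
  have h : Real.cos (j * Real.pi / (n+1)) < Real.cos (i * Real.pi / (n+1)) := by
    apply Real.cos_lt_cos_of_nonneg_of_le_pi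
    · positivity
    · rw [div_le_iff₀ (by positivity)]; nlinarith
    · gcongr
  linarith

lemma VV_yy (n : ℕ) {i : ℕ} (h0 : 0 < i) (hi : i ≤ n) : (VV n).eval (yy n i) = 0 := by
  have hpi := Real.pi_pos
  have hi' : (i:ℝ) < n + 1 := by exact_mod_cast Nat.lt_succ_of_le hi
  have h0' : (0:ℝ) < i := by exact_mod_cast h0
  have e : 2 * yy n i - 1 = Real.cos (i * Real.pi / (n+1)) := by unfold yy; ring
  rw [VV_eval, e]
  have h := Chebyshev.U_real_cos (i * Real.pi / (n+1)) n
  have e2 : (((n:ℤ):ℝ) + 1) * (i * Real.pi / (n+1)) = i * Real.pi := by push_cast; field_simp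
  rw [e2, Real.sin_nat_mul_pi] at h
  have hs : 0 < Real.sin (i * Real.pi / (n+1)) := by
    apply Real.sin_pos_of_pos_of_lt_pi
    · positivity
    · rw [div_lt_iff₀ (by positivity)]; nlinarith
  exact (mul_eq_zero.1 h).resolve_right hs.ne'

lemma sg_piece (n : ℕ) {i : ℕ} (hi : i ≤ n) {t : ℝ} (h1 : yy n (i+1) < t) (h2 : t < yy n i) :
    sg n t = (-1) ^ i := by
  have hpi := Real.pi_pos
  have hi' : (i:ℝ) ≤ n := by exact_mod_cast hi
  have hN : (0:ℝ) < n + 1 := by positivity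
  set θ := Real.arccos (2 * t - 1) with hθ
  have b1 : Real.cos ((i+1:ℕ) * Real.pi / (n+1)) < 2 * t - 1 := by unfold yy at h1; linarith
  have b2 : 2 * t - 1 < Real.cos (i * Real.pi / (n+1)) := by unfold yy at h2; linarith
  have c1 : -1 ≤ 2 * t - 1 := (Real.neg_one_le_cos _).trans b1.le
  have c2 : 2 * t - 1 ≤ 1 := b2.le.trans (Real.cos_le_one _)
  have hc : Real.cos θ = 2 * t - 1 := Real.cos_arccos c1 c2
  have t1 : i * Real.pi / (n+1) < θ := by
    by_contra h
    push Not at h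
    have := Real.cos_le_cos_of_nonneg_of_le_pi (Real.arccos_nonneg (2*t-1))
      (by rw [div_le_iff₀ hN]; nlinarith) h
    rw [← hθ, hc] at this
    linarith
  have t2 : θ < (i+1:ℕ) * Real.pi / (n+1) := by
    by_contra h
    push Not at h
    have := Real.cos_le_cos_of_nonneg_of_le_pi (by positivity) (Real.arccos_le_pi (2*t-1)) h
    rw [← hθ, hc] at this
    linarith
  have s0 : 0 < Real.sin θ := by
    apply Real.sin_pos_of_pos_of_lt_pi
    · exact lt_of_le_of_lt (by positivity) t1
    · refine lt_of_lt_of_le t2 ?_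
      rw [div_le_iff₀ hN]; push_cast; nlinarith
  rw [div_lt_iff₀ hN] at t1
  rw [lt_div_iff₀ hN] at t2
  push_cast at t2
  have s1 : 0 < Real.sin ((n+1) * θ - i * Real.pi) := by
    apply Real.sin_pos_of_pos_of_lt_pi <;> linarith
  rw [Real.sin_sub_nat_mul_pi] at s1
  have h := Chebyshev.U_real_cos θ n
  rw [hc, ← VV_eval] at h
  push_cast at h
  rw [← h] at s1
  have s2 : 0 < (-1) ^ i * (VV n).eval t := by
    by_contra hh
    push Not at hh
    nlinarith
  unfold sg
  rcases neg_one_pow_eq_or ℝ i with e | e <;> rw [e] at s2 ⊢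
  · rw [if_pos (by linarith)]
  · rw [if_neg (by linarith)]

lemma VV_int (k : ℕ) (a b : ℝ) : ∫ t in a..b, (VV k).eval t =
    ((Chebyshev.T ℝ (k+1:ℕ)).eval (2*b-1) - (Chebyshev.T ℝ (k+1:ℕ)).eval (2*a-1)) / (2*(k+1)) := by
  have : ∀ t ∈ uIcc a b, HasDerivAt (fun t => (Chebyshev.T ℝ (k+1:ℕ)).eval (2*t-1) / (2*((k:ℝ)+1)))
      ((VV k).eval t) t := by
    intro t _
    have h1 := (Chebyshev.T ℝ (k+1:ℕ)).hasDerivAt (2*t-1)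
    have h2 : HasDerivAt (fun t : ℝ => 2*t-1) 2 t := by
      simpa using ((hasDerivAt_id t).const_mul 2).sub_const 1
    have h3 := (h1.comp t h2).div_const (2*((k:ℝ)+1))
    refine h3.congr_deriv ?_
    rw [Chebyshev.T_derivative_eq_U, VV_eval]
    push_cast
    simp
    field_simp
  rw [intervalIntegral.integral_eq_sub_of_hasDerivAt this ((VV k).continuous.intervalIntegrable _ _)]
  ring

lemma sg_int (n k : ℕ) : ∫ t in (0:ℝ)..1, sg n t * (VV k).eval t =
    (∑ i ∈ Finset.range (n+1), (-1) ^ i * (Real.cos ((k+1) * (i * Real.pi / (n+1))) -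
      Real.cos ((k+1) * ((i+1) * Real.pi / (n+1))))) / (2 * (k+1)) := by
  have hIntg : ∀ a b, IntervalIntegrable (fun t => sg n t * (VV k).eval t) volume a b := fun a b =>
    sg_mul_intervalIntegrable n ((VV k).continuous.intervalIntegrable _ _)
  have hsum := intervalIntegral.sum_integral_adjacent_intervals (a := yy n) (n := n + 1)
    (fun i _ => hIntg _ _)
  rw [yy_zero, yy_last] at hsum
  rw [intervalIntegral.integral_symm, ← hsum, ← Finset.sum_neg_distrib, Finset.sum_div]
  refine Finset.sum_congr rfl fun i hi => ?_
  have hi' : i ≤ n := by simpa [Nat.lt_succ_iff] using hi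
  rw [← intervalIntegral.integral_symm]
  have : ∫ t in yy n (i+1)..yy n i, sg n t * (VV k).eval t =
      ∫ t in yy n (i+1)..yy n i, (-1)^i * (VV k).eval t := by
    rw [intervalIntegral.integral_of_le (yy_lt n (Nat.lt_succ_self i) (by omega)).le,
      intervalIntegral.integral_of_le (yy_lt n (Nat.lt_succ_self i) (by omega)).le,
      integral_Ioc_eq_integral_Ioo, integral_Ioc_eq_integral_Ioo]
    refine setIntegral_congr_fun measurableSet_Ioo fun t ht => ?_
    change sg n t * _ = _ * _
    rw [sg_piece n hi' ht.1 ht.2]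
  rw [this, intervalIntegral.integral_const_mul, VV_int]
  have e1 : 2 * yy n i - 1 = Real.cos (i * Real.pi / (n+1)) := by unfold yy; ring
  have e2 : 2 * yy n (i+1) - 1 = Real.cos ((i+1) * Real.pi / (n+1)) := by unfold yy; push_cast; ring
  rw [e1, e2, Chebyshev.T_real_cos, Chebyshev.T_real_cos]
  push_cast
  ring

lemma sg_int_self (n : ℕ) : ∫ t in (0:ℝ)..1, sg n t * (VV n).eval t = 1 := by
  rw [sg_int]
  have : ∀ i ∈ Finset.range (n+1), (-1:ℝ) ^ i * (Real.cos ((n+1) * (i * Real.pi / (n+1))) -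
      Real.cos ((n+1) * ((i+1) * Real.pi / (n+1)))) = 2 := by
    intro i _
    have e1 : ((n:ℝ)+1) * (i * Real.pi / (n+1)) = i * Real.pi := by field_simp
    have e2 : ((n:ℝ)+1) * ((i+1) * Real.pi / (n+1)) = (i+1:ℕ) * Real.pi := by push_cast; field_simp
    rw [e1, e2, Real.cos_nat_mul_pi, Real.cos_nat_mul_pi, pow_succ]
    rcases neg_one_pow_eq_or ℝ i with e | e <;> rw [e] <;> norm_num
  rw [Finset.sum_congr rfl this]
  simp
  field_simp

lemma alt_tel (s : ℕ → ℝ) (N : ℕ) : ∑ i ∈ Finset.range N, (-1:ℝ)^i * (s i + s (i+1)) =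
    s 0 - (-1)^N * s N := by
  induction N with
  | zero => simp
  | succ N ih => rw [Finset.sum_range_succ, ih]; ring

lemma sg_int_lt (n k : ℕ) (hk : k < n) : ∫ t in (0:ℝ)..1, sg n t * (VV k).eval t = 0 := by
  rw [sg_int]
  have hpi := Real.pi_pos
  have hk' : (k:ℝ) < n := by exact_mod_cast hk
  set α : ℝ := (k+1) * Real.pi / (n+1) with hα
  have hcos : 0 < Real.cos (α/2) := by
    have h0 : 0 ≤ α := by positivity
    have h1 : α < Real.pi := by rw [hα, div_lt_iff₀ (by positivity)]; nlinarith
    apply Real.cos_pos_of_mem_Ioo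
    constructor <;> linarith
  have key : Real.cos (α/2) * ∑ i ∈ Finset.range (n+1), (-1) ^ i *
      (Real.cos ((k+1) * (i * Real.pi / (n+1))) -
      Real.cos ((k+1) * ((i+1) * Real.pi / (n+1)))) = Real.sin (α/2) *
      ∑ i ∈ Finset.range (n+1), (-1:ℝ)^i * (Real.sin (i * α) + Real.sin ((i+1:ℕ) * α)) := by
    rw [Finset.mul_sum, Finset.mul_sum]
    refine Finset.sum_congr rfl fun i _ => ?_
    have e1 : ((k:ℝ)+1) * (i * Real.pi / (n+1)) = (i+1/2)*α - α/2 := by rw [hα]; ring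
    have e2 : ((k:ℝ)+1) * ((i+1) * Real.pi / (n+1)) = (i+1/2)*α + α/2 := by rw [hα]; ring
    have e3 : (i:ℝ) * α = (i+1/2)*α - α/2 := by ring
    have e4 : ((i+1:ℕ):ℝ) * α = (i+1/2)*α + α/2 := by push_cast; ring
    rw [e1, e2, e3, e4, Real.cos_add, Real.cos_sub, Real.sin_add, Real.sin_sub]
    ring
  rw [alt_tel (fun i => Real.sin (i * α))] at key
  have e5 : ((n+1:ℕ):ℝ) * α = (k+1:ℕ) * Real.pi := by rw [hα]; push_cast; field_simp
  simp only [e5, Real.sin_nat_mul_pi] at key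
  simp at key
  rcases key with h | h
  · exact absurd h hcos.ne'
  · rw [h]; simp

lemma sg_int_poly (n : ℕ) (Q : ℝ[X]) (hQ : Q.degree < n) :
    ∫ t in (0:ℝ)..1, sg n t * Q.eval t = 0 := by
  have hmem : Q ∈ degreeLT ℝ n := by rwa [mem_degreeLT]
  rw [← Sequence.span_degreeLT VVseq (by
      intro i _
      have : (VVseq i).leadingCoeff = 2^(2*i) := VV_leadingCoeff i
      rw [this]; simp),
    show Set.Iio n = Finset.range n by simp,
    Submodule.mem_span_image_finset_iff_exists_fun'] at hmem
  obtain ⟨c, rfl⟩ := hmem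
  have : ∀ t, sg n t * (∑ i ∈ Finset.range n, c i • VVseq i).eval t =
      ∑ i ∈ Finset.range n, c i * (sg n t * (VV i).eval t) := by
    intro t
    rw [eval_finsetSum, Finset.mul_sum]
    refine Finset.sum_congr rfl fun i _ => ?_
    rw [eval_smul, smul_eq_mul]
    change sg n t * (c i * (VV i).eval t) = _
    ring
  simp_rw [this]
  rw [intervalIntegral.integral_finsetSum]
  · refine Finset.sum_eq_zero fun i hi => ?_
    rw [intervalIntegral.integral_const_mul, sg_int_lt n i (Finset.mem_range.1 hi), mul_zero]
  · intro i _
    exact (sg_mul_intervalIntegrable n ((VV i).continuous.intervalIntegrable _ _)).const_mul _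

lemma IsDn.cont {n : ℕ} {a b : ℝ} {fd : ℕ → ℝ → ℝ} (hn : 1 ≤ n) (h : IsDn n a b fd) :
    ContinuousOn (fd 0) (Set.Icc a b) := by
  obtain ⟨h1, h2, h3⟩ := h
  rcases Nat.eq_or_lt_of_le hn with e | e
  · subst e; exact h2
  · exact fun x hx => (h1 0 e x hx).continuousWithinAt

lemma IsDn.shift {n : ℕ} {a b : ℝ} {fd : ℕ → ℝ → ℝ} (h : IsDn (n + 2) a b fd) :
    IsDn (n + 1) a b (fun k => fd (k + 1)) := by
  obtain ⟨h1, h2, h3⟩ := h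
  refine ⟨fun k hk x hx => h1 (k+1) (by omega) x hx, h2, h3⟩

lemma IsDn.deriv0 {n : ℕ} {a b : ℝ} {fd : ℕ → ℝ → ℝ} (h : IsDn (n + 1) a b fd) :
    ∀ x ∈ Set.Ioo a b, HasDerivAt (fd 0) (fd 1 x) x := by
  obtain ⟨h1, h2, h3⟩ := h
  intro x hx
  cases n with
  | zero => exact h3 x hx
  | succ n => exact (h1 0 (by omega) x (Ioo_subset_Icc_self hx)).hasDerivAt (Icc_mem_nhds hx.1 hx.2)

lemma IsDn.sub_poly {n : ℕ} {a b : ℝ} {fd : ℕ → ℝ → ℝ} (hn : 1 ≤ n) (h : IsDn n a b fd) (P : ℝ[X]) :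
    IsDn n a b (fun k x => fd k x - (derivative^[k] P).eval x) := by
  obtain ⟨h1, h2, h3⟩ := h
  refine ⟨fun k hk x hx => ?_, ?_, fun x hx => ?_⟩
  · beta_reduce
    rw [Function.iterate_succ_apply']
    exact (h1 k hk x hx).sub ((derivative^[k] P).hasDerivAt x).hasDerivWithinAt
  · exact h2.sub (Polynomial.continuous _).continuousOn
  · have := (h3 x hx).sub ((derivative^[n-1] P).hasDerivAt x)
    rw [← Function.iterate_succ_apply' derivative, show (n-1).succ = n by omega] at this
    exact this

lemma IsDn.const_mul {n : ℕ} {a b : ℝ} {fd : ℕ → ℝ → ℝ} (h : IsDn n a b fd) (c : ℝ) :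
    IsDn n a b (fun k x => c * fd k x) := by
  obtain ⟨h1, h2, h3⟩ := h
  exact ⟨fun k hk x hx => (h1 k hk x hx).const_mul c, h2.const_mul c, fun x hx => (h3 x hx).const_mul c⟩

lemma rolle_seq (n : ℕ) : ∀ (fd : ℕ → ℝ → ℝ), IsDn (n+1) 0 1 fd → ∀ z : ℕ → ℝ,
    (∀ i ≤ n+1, z i ∈ Set.Icc (0:ℝ) 1) → (∀ i < n+1, z i < z (i+1)) →
    (∀ i ≤ n+1, fd 0 (z i) = 0) → ∃ ξ ∈ Set.Ioo (0:ℝ) 1, fd (n+1) ξ = 0 := by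
  induction n with
  | zero =>
    intro fd h z hz hm h0
    have a0 := hz 0 (by omega)
    have a1 := hz 1 (by omega)
    obtain ⟨c, hc, e⟩ := exists_hasDerivAt_eq_zero (hm 0 (by omega))
      ((h.cont le_rfl).mono (Icc_subset_Icc a0.1 a1.2)) (by rw [h0 0 (by omega), h0 1 (by omega)])
      (fun x hx => h.deriv0 x ⟨a0.1.trans_lt hx.1, hx.2.trans_le a1.2⟩)
    exact ⟨c, ⟨a0.1.trans_lt hc.1, hc.2.trans_le a1.2⟩, e⟩
  | succ n ih =>
    intro fd h z hz hm h0
    have hr : ∀ i, ∃ c, i < n + 2 → c ∈ Set.Ioo (z i) (z (i+1)) ∧ fd 1 c = 0 := by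
      intro i
      by_cases hi : i < n + 2
      · have a0 := hz i (by omega)
        have a1 := hz (i+1) (by omega)
        obtain ⟨c, hc, e⟩ := exists_hasDerivAt_eq_zero (hm i (by omega))
          ((h.cont (by omega)).mono (Icc_subset_Icc a0.1 a1.2))
          (by rw [h0 i (by omega), h0 (i+1) (by omega)])
          (fun x hx => h.deriv0 x ⟨a0.1.trans_lt hx.1, hx.2.trans_le a1.2⟩)
        exact ⟨c, fun _ => ⟨hc, e⟩⟩
      · exact ⟨0, fun hh => absurd hh hi⟩
    choose w hw using hr
    refine ih (fun k => fd (k+1)) h.shift w (fun i hi => ?_) (fun i hi => ?_) (fun i hi => ?_)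
    · have := (hw i (by omega)).1
      exact ⟨(hz i (by omega)).1.trans this.1.le, this.2.le.trans (hz (i+1) (by omega)).2⟩
    · exact (hw i (by omega)).1.2.trans (hw (i+1) (by omega)).1.1
    · exact (hw i (by omega)).2

lemma rolle_finset {n : ℕ} (hn : 1 ≤ n) {fd : ℕ → ℝ → ℝ} (h : IsDn n 0 1 fd) (S : Finset ℝ)
    (hS : S.card = n + 1) (hsub : ∀ x ∈ S, x ∈ Set.Icc (0:ℝ) 1) (h0 : ∀ x ∈ S, fd 0 x = 0) :
    ∃ ξ ∈ Set.Ioo (0:ℝ) 1, fd n ξ = 0 := by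
  obtain ⟨n, rfl⟩ : ∃ k, n = k + 1 := ⟨n-1, by omega⟩
  let z : ℕ → ℝ := fun i => if hi : i < n + 1 + 1 then S.orderEmbOfFin hS ⟨i, hi⟩ else 0
  have hz : ∀ i ≤ n + 1, z i ∈ S := by
    intro i hi
    simp only [z, dif_pos (show i < n + 1 + 1 by omega)]
    exact S.orderEmbOfFin_mem hS _
  refine rolle_seq n fd h z (fun i hi => hsub _ (hz i hi)) (fun i hi => ?_) (fun i hi => h0 _ (hz i hi))
  simp only [z, dif_pos (show i < n + 1 + 1 by omega), dif_pos (show i + 1 < n + 1 + 1 by omega)]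
  apply (S.orderEmbOfFin hS).strictMono
  simp

lemma iter_deriv_eval (P : ℝ[X]) (n : ℕ) (hP : P.natDegree ≤ n) (x : ℝ) :
    (derivative^[n] P).eval x = (n ! : ℝ) * P.coeff n := by
  have h : (derivative^[n] P).natDegree ≤ 0 := by
    have := natDegree_iterate_derivative P n
    omega
  rw [eq_C_of_natDegree_le_zero h, eval_C, coeff_iterate_derivative]
  simp [Nat.descFactorial_self]

lemma yy_mem (n i : ℕ) : yy n i ∈ Set.Icc (0:ℝ) 1 := by
  unfold yy
  have h1 := Real.neg_one_le_cos (i * Real.pi / (n+1))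
  have h2 := Real.cos_le_one (i * Real.pi / (n+1))
  constructor <;> linarith

lemma yy_inj (n : ℕ) : Set.InjOn (fun i => yy n (i+1)) (Finset.range n) := by
  intro i hi j hj e
  have hi' : i < n := by simpa using hi
  have hj' : j < n := by simpa using hj
  have e' : yy n (i+1) = yy n (j+1) := e
  by_contra hne
  rcases Nat.lt_or_gt_of_ne hne with hl | hl
  · have := yy_lt n (i := i+1) (j := j+1) (by omega) (by omega)
    linarith
  · have := yy_lt n (i := j+1) (j := i+1) (by omega) (by omega)
    linarith

lemma interp_gen (n : ℕ) (v : ℕ → ℝ) (hinj : Set.InjOn v (Finset.range n)) (r : ℕ → ℝ) :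
    ∃ Q : ℝ[X], Q.degree < n ∧ ∀ i < n, Q.eval (v i) = r i := by
  refine ⟨Lagrange.interpolate (Finset.range n) v r, ?_, fun i hi => ?_⟩
  · have := Lagrange.degree_interpolate_lt r hinj
    rwa [Finset.card_range] at this
  · exact Lagrange.eval_interpolate_at_node r hinj (Finset.mem_range.2 hi)

lemma interp_aux (n : ℕ) (f : ℝ → ℝ) :
    Set.InjOn (fun i => yy n (i+1)) (Finset.range n) ∧ ∃ Q : ℝ[X], Q.degree < n ∧
    ∀ i < n, Q.eval (yy n (i+1)) = f (yy n (i+1)) :=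
  ⟨yy_inj n, interp_gen n _ (yy_inj n) _⟩

lemma interp {n : ℕ} (hn : 1 ≤ n) {fd : ℕ → ℝ → ℝ} (h : IsDn n 0 1 fd) {m : ℝ}
    (hm : ∀ t ∈ Set.Ioo (0:ℝ) 1, m ≤ fd n t) : ∃ Q : ℝ[X], Q.degree < n ∧
    ∀ x ∈ Set.Icc (0:ℝ) 1, m / (2 ^ (2 * n) * (n ! : ℝ)) * (sg n x * (VV n).eval x) ≤
      sg n x * (fd 0 x - Q.eval x) := by
  obtain ⟨hinj, Q, hdeg, hev⟩ := interp_aux n (fd 0)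
  refine ⟨Q, hdeg, fun x hx => ?_⟩
  obtain ⟨S, hSdef⟩ : ∃ S, S = (Finset.range n).image (fun i => yy n (i+1)) := ⟨_, rfl⟩
  have hScard : S.card = n := by rw [hSdef, Finset.card_image_of_injOn hinj, Finset.card_range]
  by_cases hxS : x ∈ S
  · obtain ⟨i, hi, rfl⟩ := Finset.mem_image.1 (hSdef ▸ hxS)
    have hi' := Finset.mem_range.1 hi
    rw [hev i hi', VV_yy n (by omega) (by omega)]
    simp
  have hcard : (insert x S).card = n + 1 := by rw [Finset.card_insert_of_notMem hxS, hScard]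
  have hVx : (VV n).eval x ≠ 0 := by
    intro hV
    apply VV_ne_zero n
    apply eq_zero_of_natDegree_lt_card_of_eval_eq_zero' (VV n) (insert x S)
    · intro y hy
      rcases Finset.mem_insert.1 hy with rfl | hy
      · exact hV
      · obtain ⟨i, hi, rfl⟩ := Finset.mem_image.1 (hSdef ▸ hy)
        have hi' := Finset.mem_range.1 hi
        exact VV_yy n (by omega) (by omega)
    · rw [VV_natDegree, hcard]; omega
  obtain ⟨l, hlx⟩ : ∃ l, fd 0 x - Q.eval x = l * (VV n).eval x :=
    ⟨(fd 0 x - Q.eval x) / (VV n).eval x, by field_simp⟩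
  obtain ⟨P, hP⟩ : ∃ P, P = Q + C l * VV n := ⟨_, rfl⟩
  obtain ⟨ξ, hξ, e⟩ := rolle_finset hn (h.sub_poly hn P) (insert x S) hcard
    (by
      intro y hy
      rcases Finset.mem_insert.1 hy with rfl | hy
      · exact hx
      · obtain ⟨i, hi, rfl⟩ := Finset.mem_image.1 (hSdef ▸ hy)
        exact yy_mem _ _)
    (by
      intro y hy
      rcases Finset.mem_insert.1 hy with rfl | hy
      · simp only [Function.iterate_zero, id, hP, eval_add, eval_mul, eval_C]
        linarith
      · obtain ⟨i, hi, rfl⟩ := Finset.mem_image.1 (hSdef ▸ hy)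
        have hi' := Finset.mem_range.1 hi
        simp only [Function.iterate_zero, id, hP, eval_add, eval_mul, eval_C]
        rw [hev i hi', VV_yy n (by omega) (by omega)]
        simp)
  have hQn : Q.natDegree ≤ n := natDegree_le_of_degree_le hdeg.le
  have hPn : P.natDegree ≤ n := by
    rw [hP]
    refine (natDegree_add_le _ _).trans (max_le hQn ?_)
    exact (natDegree_C_mul_le _ _).trans (VV_natDegree n).le
  have hVc : (VV n).coeff n = 2 ^ (2*n) := by
    have := VV_leadingCoeff n
    rwa [leadingCoeff, VV_natDegree] at this
  have hPc : P.coeff n = l * 2 ^ (2*n) := by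
    rw [hP, coeff_add, coeff_C_mul, hVc, coeff_eq_zero_of_degree_lt hdeg, zero_add]
  simp only [iter_deriv_eval P n hPn, hPc] at e
  have hml := hm ξ hξ
  have hf : (0:ℝ) < n ! := by exact_mod_cast Nat.factorial_pos n
  have hml' : m / (2 ^ (2 * n) * (n ! : ℝ)) ≤ l := by
    rw [div_le_iff₀ (by positivity)]
    linarith
  rw [hlx, sg_mul_VV, mul_left_comm, sg_mul_VV]
  exact mul_le_mul_of_nonneg_right hml' (abs_nonneg _)

lemma key_sg {n : ℕ} (hn : 1 ≤ n) {fd : ℕ → ℝ → ℝ} (h : IsDn n 0 1 fd) {m : ℝ}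
    (hm : ∀ t ∈ Set.Ioo (0:ℝ) 1, m ≤ fd n t) :
    m / (2 ^ (2 * n) * (n ! : ℝ)) ≤ ∫ t in (0:ℝ)..1, sg n t * fd 0 t := by
  obtain ⟨Q, hQ, hle⟩ := interp hn h hm
  have hfc := (h.cont hn).intervalIntegrable_of_Icc (μ := volume) zero_le_one
  have hQc : IntervalIntegrable (fun t => Q.eval t) volume 0 1 := Q.continuous.intervalIntegrable _ _
  have h1 := intervalIntegral.integral_mono_on zero_le_one
    ((sg_mul_intervalIntegrable n ((VV n).continuous.intervalIntegrable (μ := volume) 0 1)).const_mul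
      (m / (2 ^ (2 * n) * (n ! : ℝ))))
    (sg_mul_intervalIntegrable n (hfc.sub hQc)) hle
  rw [intervalIntegral.integral_const_mul, sg_int_self, mul_one] at h1
  refine h1.trans (le_of_eq ?_)
  simp_rw [mul_sub]
  rw [intervalIntegral.integral_sub (sg_mul_intervalIntegrable n hfc)
    (sg_mul_intervalIntegrable n hQc), sg_int_poly n Q hQ, sub_zero]

lemma key_abs {n : ℕ} (hn : 1 ≤ n) {fd : ℕ → ℝ → ℝ} (h : IsDn n 0 1 fd) {m : ℝ}
    (hm : ∀ t ∈ Set.Ioo (0:ℝ) 1, m ≤ fd n t) :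
    m / (2 ^ (2 * n) * (n ! : ℝ)) ≤ ∫ t in (0:ℝ)..1, |fd 0 t| := by
  have hfc := (h.cont hn).intervalIntegrable_of_Icc (μ := volume) zero_le_one
  refine (key_sg hn h hm).trans ?_
  refine intervalIntegral.integral_mono_on zero_le_one (sg_mul_intervalIntegrable n hfc) hfc.abs ?_
  intro t _
  refine (le_abs_self _).trans ?_
  rw [abs_mul, sg_abs, one_mul]

lemma IsDn.scale {n : ℕ} (hn : 1 ≤ n) {fd : ℕ → ℝ → ℝ} (h : IsDn n 0 1 fd) {b : ℝ} (hb : 0 < b) (hb1 : b ≤ 1) :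
    IsDn n 0 1 (fun k x => b ^ k * fd k (b * x)) := by
  obtain ⟨h1, h2, h3⟩ := h
  have hmaps : Set.MapsTo (fun x => b * x) (Set.Icc (0:ℝ) 1) (Set.Icc 0 1) := by
    intro x hx
    exact ⟨mul_nonneg hb.le hx.1, mul_le_one₀ hb1 hx.1 hx.2⟩
  have hd : ∀ x, HasDerivAt (fun x : ℝ => b * x) b x := fun x => by
    simpa using (hasDerivAt_id x).const_mul b
  refine ⟨fun k hk x hx => ?_, ?_, fun x hx => ?_⟩
  · have := ((h1 k hk (b*x) (hmaps hx)).comp x (hd x).hasDerivWithinAt hmaps).const_mul (b^k)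
    refine this.congr_deriv ?_
    beta_reduce
    rw [pow_succ]; ring
  · refine ContinuousOn.const_mul ?_ _
    exact h2.comp (by fun_prop) hmaps
  · have hbx : b * x ∈ Set.Ioo (0:ℝ) 1 := ⟨mul_pos hb hx.1, by nlinarith [hx.1, hx.2]⟩
    have := ((h3 (b*x) hbx).comp x (hd x)).const_mul (b^(n-1))
    refine this.congr_deriv ?_
    obtain ⟨k, rfl⟩ : ∃ k, n = k + 1 := ⟨n-1, by omega⟩
    simp only [Nat.add_sub_cancel]
    rw [pow_succ]; ring

lemma sg_near (n : ℕ) (hn : 1 ≤ n) : ∃ b : ℝ, 0 < b ∧ b < 1 ∧ ∀ t ∈ Set.Ioo 0 b, sg n t = (-1)^n := by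
  refine ⟨yy n n, ?_, ?_, ?_⟩
  · rw [← yy_last n]; exact yy_lt n (Nat.lt_succ_self n) le_rfl
  · rw [← yy_zero n]; exact yy_lt n (by omega) (by omega)
  · intro t ht
    exact sg_piece n le_rfl (by rw [yy_last]; exact ht.1) ht.2

lemma far_sg (n : ℕ) (hn : 1 ≤ n) : ∃ c : ℝ, 0 < c ∧ c < 1 ∧ ∀ (fd : ℕ → ℝ → ℝ) (m : ℝ),
    IsDn n 0 1 fd → (∀ t ∈ Set.Ioo (0:ℝ) 1, m ≤ fd n t) →
    c * (m / (2 ^ (2 * n) * (n ! : ℝ))) ≤ ∫ t in (0:ℝ)..1, |fd 0 t - sg n t| := by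
  obtain ⟨b, hb0, hb1, hb⟩ := sg_near n hn
  refine ⟨b ^ (n+1), by positivity, pow_lt_one₀ hb0.le hb1 (by omega), fun fd m h hm => ?_⟩
  have hD := (h.scale hn hb0 hb1.le).sub_poly hn (C ((-1:ℝ)^n))
  have hk := key_abs hn hD (m := b^n * m) (by
    intro t ht
    have h0 : derivative^[n] (C ((-1:ℝ)^n)) = 0 := iterate_derivative_eq_zero (by
      rw [natDegree_C]; omega)
    rw [h0, eval_zero, sub_zero]
    exact mul_le_mul_of_nonneg_left (hm _ ⟨mul_pos hb0 ht.1, by nlinarith [ht.1, ht.2]⟩) (by positivity))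
  simp only [pow_zero, one_mul, Function.iterate_zero, id, eval_C] at hk
  have hsub := intervalIntegral.integral_comp_mul_left (a := 0) (b := 1)
    (fun t => |fd 0 t - (-1)^n|) hb0.ne'
  rw [mul_zero, mul_one, smul_eq_mul] at hsub
  rw [hsub] at hk
  have hfc := (h.cont hn).intervalIntegrable_of_Icc (μ := volume) zero_le_one
  have hsg : IntervalIntegrable (sg n) volume 0 1 := by
    have := sg_mul_intervalIntegrable n (intervalIntegrable_const (μ := volume) (a := 0) (b := 1) (c := (1:ℝ)))
    simpa using this
  have hIntg : IntervalIntegrable (fun t => |fd 0 t - sg n t|) volume 0 1 := (hfc.sub hsg).abs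
  have e1 : ∫ t in (0:ℝ)..b, |fd 0 t - (-1)^n| = ∫ t in (0:ℝ)..b, |fd 0 t - sg n t| := by
    rw [intervalIntegral.integral_of_le hb0.le, intervalIntegral.integral_of_le hb0.le,
      integral_Ioc_eq_integral_Ioo, integral_Ioc_eq_integral_Ioo]
    refine setIntegral_congr_fun measurableSet_Ioo fun t ht => ?_
    beta_reduce
    rw [hb t ht]
  have e2 : ∫ t in (0:ℝ)..b, |fd 0 t - sg n t| ≤ ∫ t in (0:ℝ)..1, |fd 0 t - sg n t| :=
    intervalIntegral.integral_mono_interval le_rfl hb0.le hb1.le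
      (Filter.Eventually.of_forall fun t => abs_nonneg _) hIntg
  rw [e1] at hk
  refine le_trans ?_ e2
  calc b ^ (n+1) * (m / (2 ^ (2 * n) * (n ! : ℝ))) = b * (b^n * m / (2 ^ (2 * n) * (n ! : ℝ))) := by
        rw [pow_succ]; ring
    _ ≤ b * (b⁻¹ * ∫ t in (0:ℝ)..b, |fd 0 t - sg n t|) := mul_le_mul_of_nonneg_left hk hb0.le
    _ = _ := by field_simp

lemma tangent {p : ℝ} (hp : 1 < p) {a : ℝ} (ha : 0 < a) {y : ℝ} (hy : 0 ≤ y) :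
    p * (a ^ (p-1) - 1) * (y - a) ≤ y ^ p - 1 - p * (y - 1) := by
  have h1 := one_add_mul_self_le_rpow_one_add (s := y/a - 1)
    (by have : 0 ≤ y / a := by positivity
        linarith) hp.le
  have h2 := one_add_mul_self_le_rpow_one_add (s := a - 1) (by linarith) hp.le
  rw [add_sub_cancel] at h1 h2
  rw [Real.div_rpow hy ha.le, le_div_iff₀ (by positivity)] at h1
  have e : a ^ p = a ^ (p-1) * a := by
    rw [← Real.rpow_add_one ha.ne']; congr 1; ring
  have h3 : (1 + p * (y/a - 1)) * a ^ p = a ^ p + p * a ^ (p-1) * (y - a) := by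
    rw [e]; field_simp
  nlinarith

lemma kappa {p : ℝ} (hp : 1 < p) {ε : ℝ} (h0 : 0 < ε) (h1 : ε < 1) :
    ∃ κ : ℝ, 0 < κ ∧ ∀ y : ℝ, κ * (|y - 1| - ε) ≤ |y| ^ p - 1 - p * (y - 1) := by
  set u := p * ((1+ε) ^ (p-1) - 1) with hu
  set v := p * (1 - (1-ε) ^ (p-1)) with hv
  have hu0 : 0 < u := by
    have := Real.one_lt_rpow (show 1 < 1 + ε by linarith) (show 0 < p - 1 by linarith)
    exact mul_pos (by linarith) (by linarith)
  have hv0 : 0 < v := by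
    have := Real.rpow_lt_one (show 0 ≤ 1 - ε by linarith) (by linarith) (show 0 < p - 1 by linarith)
    exact mul_pos (by linarith) (by linarith)
  have hvp : v ≤ p := by
    have : 0 ≤ (1-ε) ^ (p-1) := Real.rpow_nonneg (by linarith) _
    rw [hv]; nlinarith
  have hk : 0 < min u v := lt_min hu0 hv0
  have hku := min_le_left u v
  have hkv := min_le_right u v
  have pos : ∀ y : ℝ, 0 ≤ y → min u v * (|y - 1| - ε) ≤ y ^ p - 1 - p * (y - 1) := by
    intro y hy
    have t0 : 0 ≤ y ^ p - 1 - p * (y - 1) := by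
      have := tangent hp one_pos hy
      simpa using this
    by_cases hc : |y - 1| ≤ ε
    · exact (mul_nonpos_of_nonneg_of_nonpos hk.le (by linarith)).trans t0
    push Not at hc
    rcases le_total 1 y with h | h
    · rw [abs_of_nonneg (by linarith)] at hc ⊢
      have := tangent hp (show 0 < 1 + ε by linarith) hy
      refine le_trans ?_ this
      rw [← hu]
      nlinarith
    · rw [abs_of_nonpos (by linarith)] at hc ⊢
      have := tangent hp (show 0 < 1 - ε by linarith) hy
      refine le_trans ?_ this
      have e : p * ((1 - ε) ^ (p - 1) - 1) * (y - (1 - ε)) = v * (1 - ε - y) := by rw [hv]; ring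
      rw [e]
      nlinarith
  refine ⟨min u v, hk, fun y => ?_⟩
  rcases le_total 0 y with h | h
  · rw [abs_of_nonneg h]; exact pos y h
  · have := pos (-y) (by linarith)
    rw [abs_of_nonpos h]
    have e1 : |y - 1| = 1 - y := by rw [abs_of_nonpos (by linarith)]; ring
    have e2 : 1 - y ≤ |-y - 1| + 2 * (-y) := by
      have := neg_abs_le (-y - 1)
      linarith
    rw [e1]
    nlinarith

lemma norm_bound (n : ℕ) (hn : 1 ≤ n) (p : ℝ) (hp : 1 < p) : ∃ B : ℝ, B < 1 ∧ 0 ≤ B ∧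
    ∀ (fd : ℕ → ℝ → ℝ) (m : ℝ), IsDn n 0 1 fd → (∀ t ∈ Set.Ioo (0:ℝ) 1, m ≤ fd n t) →
    ∫ t in (0:ℝ)..1, |fd 0 t| ^ p = 1 → m / (2 ^ (2 * n) * (n ! : ℝ)) ≤ B := by
  obtain ⟨c, hc0, hc1, hc⟩ := far_sg n hn
  obtain ⟨κ, hκ, hk⟩ := kappa hp (show 0 < c/4 by linarith) (by linarith)
  refine ⟨max (1/2) (1 - κ * (c/4) / p), max_lt (by norm_num) ?_, ?_, fun fd m h hm hIntg => ?_⟩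
  · have : 0 < κ * (c/4) / p := by positivity
    linarith
  · exact le_trans (by norm_num) (le_max_left _ _)
  by_cases hlo : m / (2 ^ (2 * n) * (n ! : ℝ)) ≤ 1/2
  · exact hlo.trans (le_max_left _ _)
  push Not at hlo
  refine le_trans ?_ (le_max_right _ _)
  have h1 := key_sg hn h hm
  have h2 := hc fd m h hm
  have hfc := (h.cont hn).intervalIntegrable_of_Icc (μ := volume) zero_le_one
  have hsf := sg_mul_intervalIntegrable n hfc
  have hpc : IntervalIntegrable (fun t => |fd 0 t| ^ p) volume 0 1 := by
    apply ContinuousOn.intervalIntegrable_of_Icc zero_le_one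
    exact (h.cont hn).abs.rpow_const (fun x hx => Or.inr (by linarith))
  have habs : ∀ t, |sg n t * fd 0 t - 1| = |fd 0 t - sg n t| := by
    intro t
    have : sg n t * fd 0 t - 1 = sg n t * (fd 0 t - sg n t) := by rw [mul_sub, sg_sq]
    rw [this, abs_mul, sg_abs, one_mul]
  have hai : IntervalIntegrable (fun t => |fd 0 t - sg n t|) volume 0 1 := by
    have := (hsf.sub (intervalIntegrable_const (c := (1:ℝ)))).abs
    simp only [habs] at this
    exact this
  have hmono := intervalIntegral.integral_mono_on zero_le_one
    ((hai.sub (intervalIntegrable_const (c := c/4))).const_mul κ)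
    ((hpc.sub (intervalIntegrable_const (c := (1:ℝ)))).sub
      ((hsf.sub (intervalIntegrable_const (c := (1:ℝ)))).const_mul p)) (by
    intro t _
    have := hk (sg n t * fd 0 t)
    rw [habs, abs_mul, sg_abs, one_mul] at this
    exact this)
  rw [intervalIntegral.integral_const_mul, intervalIntegral.integral_sub hai intervalIntegrable_const,
    intervalIntegral.integral_sub (hpc.sub intervalIntegrable_const)
      ((hsf.sub intervalIntegrable_const).const_mul p),
    intervalIntegral.integral_sub hpc intervalIntegrable_const, intervalIntegral.integral_const_mul,
    intervalIntegral.integral_sub hsf intervalIntegrable_const, hIntg] at hmono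
  simp only [intervalIntegral.integral_const, sub_zero, one_smul, sub_self, zero_sub] at hmono
  have h3 : κ * (c/4) ≤ κ * ((∫ t in (0:ℝ)..1, |fd 0 t - sg n t|) - c/4) := by
    apply mul_le_mul_of_nonneg_left _ hκ.le
    nlinarith
  have hp0 : 0 < p := by linarith
  have h4 : κ * (c/4) / p ≤ 1 - ∫ t in (0:ℝ)..1, sg n t * fd 0 t := by
    rw [div_le_iff₀ hp0]
    linarith
  linarith

lemma Lp_pos {n : ℕ} (hn : 1 ≤ n) {p : ℝ} (hp : 1 < p) {fd : ℕ → ℝ → ℝ} (h : IsDn n 0 1 fd)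
    (hne : ∃ x ∈ Set.Icc (0:ℝ) 1, fd 0 x ≠ 0) : 0 < ∫ t in (0:ℝ)..1, |fd 0 t| ^ p := by
  have hcont : ContinuousOn (fun t => |fd 0 t| ^ p) (Set.Icc 0 1) :=
    (h.cont hn).abs.rpow_const (fun x hx => Or.inr (by linarith))
  obtain ⟨x, hx, hx0⟩ := hne
  have := intervalIntegral.integral_lt_integral_of_continuousOn_of_le_of_exists_lt
    (f := fun _ => (0:ℝ)) zero_lt_one continuousOn_const hcont
    (fun t _ => Real.rpow_nonneg (abs_nonneg _) _) ⟨x, hx, Real.rpow_pos_of_pos (abs_pos.2 hx0) _⟩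
  simpa using this

lemma upper (n : ℕ) (hn : 1 ≤ n) (p : ℝ) (hp : 1 < p) : ∃ B : ℝ, B < 2 ^ (2 * n) * (n ! : ℝ) ∧
    ∀ fd : ℕ → ℝ → ℝ, IsDn n 0 1 fd → (∃ x ∈ Set.Icc (0:ℝ) 1, fd 0 x ≠ 0) →
    mIoo n 0 1 fd / Lp p 0 1 (fd 0) ≤ B := by
  obtain ⟨B, hB1, hB0, hB⟩ := norm_bound n hn p hp
  have hK : 0 < 2 ^ (2 * n) * (n ! : ℝ) := by positivity
  refine ⟨B * (2 ^ (2 * n) * (n ! : ℝ)), by nlinarith, fun fd h hne => ?_⟩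
  have hp0 : 0 < p := by linarith
  have hI := Lp_pos hn hp h hne
  set I := ∫ t in (0:ℝ)..1, |fd 0 t| ^ p with hIdef
  have hL : 0 < Lp p 0 1 (fd 0) := Real.rpow_pos_of_pos hI _
  have hLp : Lp p 0 1 (fd 0) ^ p = I := by
    change (I ^ (1/p)) ^ p = I
    rw [← Real.rpow_mul hI.le, one_div, inv_mul_cancel₀ hp0.ne', Real.rpow_one]
  set L := Lp p 0 1 (fd 0) with hLdef
  set m := mIoo n 0 1 fd with hmdef
  have hmle : ∀ t ∈ Set.Ioo (0:ℝ) 1, m ≤ |fd n t| := by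
    intro t ht
    exact csInf_le ⟨0, by rintro _ ⟨s, _, rfl⟩; exact abs_nonneg _⟩ ⟨t, ht, rfl⟩
  by_cases hm0 : m ≤ 0
  · exact (div_nonpos_of_nonpos_of_nonneg hm0 hL.le).trans (by positivity)
  push Not at hm0
  -- constant sign
  have hs : ∃ s : ℝ, |s| = 1 ∧ ∀ t ∈ Set.Ioo (0:ℝ) 1, m ≤ s * fd n t := by
    have hd := hasDerivWithinAt_forall_lt_or_forall_gt_of_forall_ne (f := fd (n-1)) (f' := fd n)
      (convex_Ioo (0:ℝ) 1) (fun x hx => (h.2.2 x hx).hasDerivWithinAt) (m := 0) (by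
        intro x hx e
        have := hmle x hx
        rw [e, abs_zero] at this
        linarith)
    rcases hd with hd | hd
    · refine ⟨-1, by simp, fun t ht => ?_⟩
      have := hmle t ht
      rw [abs_of_neg (hd t ht)] at this
      linarith
    · refine ⟨1, by simp, fun t ht => ?_⟩
      have := hmle t ht
      rw [abs_of_pos (hd t ht)] at this
      linarith
  obtain ⟨s, hs1, hs⟩ := hs
  have hfin := hB _ (m / L) (h.const_mul (s / L)) (by
    intro t ht
    rw [div_mul_eq_mul_div]
    exact div_le_div_of_nonneg_right (hs t ht) hL.le) (by
    have : ∀ t, |s / L * fd 0 t| ^ p = (L ^ p)⁻¹ * |fd 0 t| ^ p := by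
      intro t
      rw [abs_mul, abs_div, hs1, abs_of_pos hL, Real.mul_rpow (by positivity) (abs_nonneg _),
        one_div, Real.inv_rpow hL.le]
    simp_rw [this]
    rw [intervalIntegral.integral_const_mul, ← hIdef, hLp]
    field_simp)
  rwa [div_le_iff₀ hK] at hfin

lemma lower (n : ℕ) (hn : 1 ≤ n) (p : ℝ) (hp : 1 < p) : ∃ fd : ℕ → ℝ → ℝ,
    IsDn n 0 1 fd ∧ (∃ x ∈ Set.Icc (0:ℝ) 1, fd 0 x ≠ 0) ∧
    2 ^ (2 * n - 1) * (n ! : ℝ) < mIoo n 0 1 fd / Lp p 0 1 (fd 0) := by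
  obtain ⟨P, hP⟩ : ∃ P : ℝ[X], P = (Chebyshev.T ℝ n).comp (2 * X - 1) := ⟨_, rfl⟩
  have hev : ∀ t, P.eval t = (Chebyshev.T ℝ n).eval (2*t-1) := by intro t; simp [hP]
  have hdeg : P.natDegree = n := by
    rw [hP, natDegree_comp, natDegree_lin, Chebyshev.natDegree_T]; simp
  have hlc : P.coeff n = 2 ^ (2*n-1) := by
    have : P.leadingCoeff = 2 ^ (2*n-1) := by
      rw [hP, leadingCoeff_comp (by rw [natDegree_lin]; norm_num), leadingCoeff_lin,
        Chebyshev.natDegree_T, Chebyshev.leadingCoeff_T, ← pow_add]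
      congr 1
      simp
      omega
    rwa [leadingCoeff, hdeg] at this
  have hD : IsDn n 0 1 (fun k x => (derivative^[k] P).eval x) := by
    refine ⟨fun k hk x hx => ?_, (Polynomial.continuous _).continuousOn, fun x hx => ?_⟩
    · beta_reduce
      rw [Function.iterate_succ_apply']
      exact ((derivative^[k] P).hasDerivAt x).hasDerivWithinAt
    · have := (derivative^[n-1] P).hasDerivAt x
      rw [← Function.iterate_succ_apply' derivative, show (n-1).succ = n by omega] at this
      exact this
  have hne : ∃ x ∈ Set.Icc (0:ℝ) 1, (fun k x => (derivative^[k] P).eval x) 0 x ≠ 0 := by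
    refine ⟨1, by simp, ?_⟩
    have e : (2:ℝ) * 1 - 1 = 1 := by norm_num
    change P.eval 1 ≠ 0
    rw [hev, e]; simp
  refine ⟨_, hD, hne, ?_⟩
  have hI := Lp_pos hn hp hD hne
  have hp0 : 0 < p := by linarith
  have hm : mIoo n 0 1 (fun k x => (derivative^[k] P).eval x) = 2 ^ (2 * n - 1) * (n ! : ℝ) := by
    unfold mIoo
    have : ∀ t : ℝ, |(derivative^[n] P).eval t| = 2 ^ (2 * n - 1) * (n ! : ℝ) := by
      intro t
      rw [iter_deriv_eval P n hdeg.le, hlc, abs_of_pos (by positivity), mul_comm]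
    simp only [this]
    rw [Set.Nonempty.image_const ⟨1/2, by norm_num⟩, csInf_singleton]
  simp only [Function.iterate_zero, id] at hI ⊢
  have hcont : ContinuousOn (fun t => |P.eval t| ^ p) (Set.Icc 0 1) :=
    P.continuous.continuousOn.abs.rpow_const (fun x hx => Or.inr (by linarith))
  have hle1 : ∀ t ∈ Set.Icc (0:ℝ) 1, |P.eval t| ≤ 1 := by
    intro t ht
    rw [hev]
    exact Chebyshev.abs_eval_T_real_le_one _ (abs_le.2 ⟨by linarith [ht.1], by linarith [ht.2]⟩)
  have hI1 : ∫ t in (0:ℝ)..1, |P.eval t| ^ p < 1 := by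
    have := intervalIntegral.integral_lt_integral_of_continuousOn_of_le_of_exists_lt
      (g := fun _ => (1:ℝ)) zero_lt_one hcont continuousOn_const
      (fun t ht => Real.rpow_le_one (abs_nonneg _) (hle1 t ⟨ht.1.le, ht.2⟩) hp0.le)
      ⟨(1 + Real.cos (Real.pi / (2*n))) / 2, by
        have h1 := Real.neg_one_le_cos (Real.pi / (2*n))
        have h2 := Real.cos_le_one (Real.pi / (2*n))
        constructor <;> linarith, by
        have hn' : (0:ℝ) < n := by exact_mod_cast hn
        have e : 2 * ((1 + Real.cos (Real.pi / (2*n))) / 2) - 1 = Real.cos (Real.pi / (2*n)) := by ring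
        have e2 : ((n:ℤ):ℝ) * (Real.pi / (2*n)) = Real.pi / 2 := by push_cast; field_simp
        beta_reduce
        rw [hev, e, Chebyshev.T_real_cos, e2, Real.cos_pi_div_two, abs_zero, Real.zero_rpow hp0.ne']
        exact one_pos⟩
    simpa using this
  have hL0 : 0 < Lp p 0 1 (fun t => P.eval t) := Real.rpow_pos_of_pos hI _
  have hL1 : Lp p 0 1 (fun t => P.eval t) < 1 := Real.rpow_lt_one hI.le hI1 (by positivity)
  rw [hm]
  have hpos : 0 < 2 ^ (2 * n - 1) * (n ! : ℝ) := by positivity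
  rw [lt_div_iff₀ hL0]
  nlinarith

/-- For `1 < p < ∞`, one has `2^{2n-1} n! < C(n,p) < 2^{2n} n!`. -/
theorem stmt15 (n : ℕ) (hn : 1 ≤ n) (p : ℝ) (hp : 1 < p) :
    2 ^ (2 * n - 1) * (n ! : ℝ) < Cnp n p ∧ Cnp n p < 2 ^ (2 * n) * (n ! : ℝ) := by
  obtain ⟨B, hBK, hB⟩ := upper n hn p hp
  obtain ⟨fd, h, hne, hlt⟩ := lower n hn p hp
  have hub : B ∈ upperBounds { c | ∃ fd : ℕ → ℝ → ℝ, IsDn n 0 1 fd ∧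
      (∃ x ∈ Set.Icc (0:ℝ) 1, fd 0 x ≠ 0) ∧ c = mIoo n 0 1 fd / Lp p 0 1 (fd 0) } := by
    rintro c ⟨fd, h, hne, rfl⟩
    exact hB fd h hne
  constructor
  · exact lt_of_lt_of_le hlt (le_csSup ⟨B, hub⟩ ⟨fd, h, hne, rfl⟩)
  · exact lt_of_le_of_lt (csSup_le ⟨_, fd, h, hne, rfl⟩ hub) hBK
end

section
/- Let n ≥ 1 be an integer and let 0 < p < 1. Then 2^{2n}·n! ≤ C(n,p) ≤ 2^{2n−1}·n!·(8/π)^{1/p}. -/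
open Set Polynomial Nat MeasureTheory ENNReal

/-- Functions on `ℝ` of class `C^d` whose `d`-th derivative grows at least like `m t` on `[0,1]`. -/
def Good : ℕ → ℝ → (ℝ → ℝ) → Prop
  | 0, m, f => Continuous f ∧ MonotoneOn (fun t => f t - m * t) (Set.Icc 0 1)
  | d + 1, m, f => ∃ f' : ℝ → ℝ, (∀ x, HasDerivAt f (f' x) x) ∧ Good d m f'

lemma Good.continuous : ∀ {d : ℕ} {m : ℝ} {f : ℝ → ℝ}, Good d m f → Continuous f
  | 0, _, _, h => h.1
  | _ + 1, _, _, ⟨_, h, _⟩ => continuous_iff_continuousAt.2 fun x => (h x).continuousAt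

lemma Good.sub_const {d : ℕ} {m : ℝ} {f : ℝ → ℝ} (c : ℝ) (h : Good d m f) :
    Good d m (fun t => f t - c) := by
  cases d with
  | zero =>
    refine ⟨h.1.sub continuous_const, fun x hx y hy hxy => ?_⟩
    have := h.2 hx hy hxy
    simp only at this ⊢
    linarith
  | succ d =>
    obtain ⟨f', h1, h2⟩ := h
    exact ⟨f', fun x => (h1 x).sub_const c, h2⟩

/-- The averaging operator. -/
noncomputable def avgOp (a : ℝ) (j : ℕ) (h : ℝ → ℝ) (t : ℝ) : ℝ :=
  ∫ s in (0:ℝ)..1, s ^ j * h (a + s * (t - a))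

lemma avg_continuous (a : ℝ) (j : ℕ) {h : ℝ → ℝ} (hh : Continuous h) : Continuous (avgOp a j h) := by
  unfold avgOp
  apply intervalIntegral.continuous_parametric_intervalIntegral_of_continuous'
  simp only [Function.uncurry_def]
  fun_prop

lemma avg_hasDerivAt (a : ℝ) (j : ℕ) {h h' : ℝ → ℝ} (hd : ∀ x, HasDerivAt h (h' x) x)
    (hh' : Continuous h') (t : ℝ) : HasDerivAt (avgOp a j h) (avgOp a (j + 1) h' t) t := by
  have hh : Continuous h := continuous_iff_continuousAt.2 fun x => (hd x).continuousAt
  have hc : Continuous (fun q : ℝ × ℝ => q.2 ^ (j + 1) * h' (a + q.2 * (q.1 - a))) := by fun_prop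
  obtain ⟨C, hC⟩ := ((isCompact_closedBall t 1).prod (isCompact_Icc (a := (0:ℝ)) (b := 1))).exists_bound_of_continuousOn
    hc.continuousOn
  have := intervalIntegral.hasDerivAt_integral_of_dominated_loc_of_deriv_le (μ := volume)
    (F := fun t s => s ^ j * h (a + s * (t - a))) (F' := fun t s => s ^ (j + 1) * h' (a + s * (t - a)))
    (x₀ := t) (s := Metric.closedBall t 1) (a := (0:ℝ)) (b := 1) (bound := fun _ => C)
    (Metric.closedBall_mem_nhds t one_pos) ?_ ?_ ?_ ?_ ?_ ?_
  · exact this.2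
  · refine Filter.Eventually.of_forall fun x => Continuous.aestronglyMeasurable ?_
    fun_prop
  · apply Continuous.intervalIntegrable
    fun_prop
  · apply Continuous.aestronglyMeasurable
    fun_prop
  · refine Filter.Eventually.of_forall fun s hs x hx => ?_
    rw [Set.uIoc_of_le zero_le_one] at hs
    exact hC (x, s) ⟨hx, hs.1.le, hs.2⟩
  · exact intervalIntegrable_const
  · refine Filter.Eventually.of_forall fun s hs x hx => ?_
    have h1 : HasDerivAt (fun x => a + s * (x - a)) (s * 1) x :=
      (((hasDerivAt_id x).sub_const a).const_mul s).const_add a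
    have h2 := ((hd (a + s * (x - a))).comp x h1).const_mul (s ^ j)
    exact h2.congr_deriv (by ring)

lemma avg_good (a : ℝ) (ha : a ∈ Set.Icc (0:ℝ) 1) : ∀ (d j : ℕ) (m : ℝ) (h : ℝ → ℝ), Good d m h →
    Good d (m / (j + d + 2)) (avgOp a j h)
  | 0, j, m, h, hg => by
    refine ⟨avg_continuous a j hg.1, fun x hx y hy hxy => ?_⟩
    have hcont := hg.1
    have key : m / (j + 2) * (y - x) ≤ avgOp a j h y - avgOp a j h x := by
      unfold avgOp
      rw [← intervalIntegral.integral_sub]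
      · have e : m / (j + 2) * (y - x) = ∫ s in (0:ℝ)..1, s ^ (j + 1) * (m * (y - x)) := by
          rw [intervalIntegral.integral_mul_const, integral_pow]
          push_cast
          simp
          ring
        rw [e]
        apply intervalIntegral.integral_mono_on zero_le_one
        · apply Continuous.intervalIntegrable; fun_prop
        · apply Continuous.intervalIntegrable; fun_prop
        · intro s hs
          have hm : ∀ z ∈ Set.Icc (0:ℝ) 1, a + s * (z - a) ∈ Set.Icc (0:ℝ) 1 := by
            intro z hz
            constructor
            · nlinarith [mul_nonneg hs.1 hz.1, mul_nonneg (sub_nonneg.2 hs.2) ha.1]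
            · nlinarith [mul_nonneg hs.1 (sub_nonneg.2 hz.2), mul_nonneg (sub_nonneg.2 hs.2) (sub_nonneg.2 ha.2)]
          have hle : a + s * (x - a) ≤ a + s * (y - a) := by nlinarith [mul_nonneg hs.1 (sub_nonneg.2 hxy)]
          have := hg.2 (hm x hx) (hm y hy) hle
          simp only at this
          have h3 : s * (m * (y - x)) ≤ h (a + s * (y - a)) - h (a + s * (x - a)) := by linarith
          have h4 := mul_le_mul_of_nonneg_left h3 (pow_nonneg hs.1 j)
          calc s ^ (j + 1) * (m * (y - x)) = s ^ j * (s * (m * (y - x))) := by ring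
            _ ≤ _ := h4
            _ = _ := by ring
      · apply Continuous.intervalIntegrable; fun_prop
      · apply Continuous.intervalIntegrable; fun_prop
    simp only [Nat.cast_zero, add_zero]
    linarith
  | d + 1, j, m, h, ⟨h', h1, h2⟩ => by
    refine ⟨avgOp a (j + 1) h', avg_hasDerivAt a j h1 h2.continuous, ?_⟩
    have := avg_good a ha d (j + 1) m h' h2
    convert this using 1
    push_cast
    ring

lemma Good.divide {d : ℕ} {m : ℝ} {f : ℝ → ℝ} (hf : Good (d + 1) m f) {a : ℝ}
    (ha : a ∈ Set.Icc (0:ℝ) 1) (hfa : f a = 0) :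
    ∃ g, Good d (m / (d + 2)) g ∧ ∀ t, f t = (t - a) * g t := by
  obtain ⟨f', h1, h2⟩ := hf
  refine ⟨avgOp a 0 f', by simpa using avg_good a ha d 0 m f' h2, fun t => ?_⟩
  unfold avgOp
  rw [← intervalIntegral.integral_const_mul]
  have hc := h2.continuous
  have : ∫ s in (0:ℝ)..1, (t - a) * (s ^ 0 * f' (a + s * (t - a))) =
      f (a + 1 * (t - a)) - f (a + 0 * (t - a)) := by
    refine intervalIntegral.integral_eq_sub_of_hasDerivAt (f := fun s => f (a + s * (t - a))) ?_ ?_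
    · intro s _
      have h3 : HasDerivAt (fun s => a + s * (t - a)) (1 * (t - a)) s :=
        ((hasDerivAt_id s).mul_const (t - a)).const_add a
      have := (h1 (a + s * (t - a))).comp s h3
      exact this.congr_deriv (by ring)
    · apply Continuous.intervalIntegrable; fun_prop
  rw [this]
  simp [hfa]

lemma exists_zero {d : ℕ} {m : ℝ} {f : ℝ → ℝ} (hf : Good d m f) :
    ∃ c, ∃ a ∈ Set.Icc (0:ℝ) 1, f a = c ∧ ∀ t ∈ Set.Icc (0:ℝ) 1, |f t - c| ≤ |f t| := by
  have hc := hf.continuous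
  obtain ⟨x, hx, hx'⟩ := isCompact_Icc.exists_isMinOn (Set.nonempty_Icc.2 (zero_le_one (α := ℝ))) hc.continuousOn
  obtain ⟨y, hy, hy'⟩ := isCompact_Icc.exists_isMaxOn (Set.nonempty_Icc.2 (zero_le_one (α := ℝ))) hc.continuousOn
  have hx'' := isMinOn_iff.1 hx'
  have hy'' := isMaxOn_iff.1 hy'
  by_cases h1 : 0 ≤ f x
  · refine ⟨f x, x, hx, rfl, fun t ht => ?_⟩
    rw [abs_of_nonneg (by linarith [hx'' t ht]), abs_of_nonneg (by linarith [hx'' t ht])]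
    linarith
  by_cases h2 : f y ≤ 0
  · refine ⟨f y, y, hy, rfl, fun t ht => ?_⟩
    rw [abs_of_nonpos (by linarith [hy'' t ht]), abs_of_nonpos (by linarith [hy'' t ht])]
    linarith
  obtain ⟨z, hz, hz'⟩ := isPreconnected_Icc.intermediate_value hx hy hc.continuousOn
    (show (0:ℝ) ∈ Set.Icc (f x) (f y) from ⟨by linarith, by linarith⟩)
  exact ⟨0, z, hz, hz', by simp⟩

lemma pointwise : ∀ (d : ℕ) (m : ℝ) (_ : 0 ≤ m) (f : ℝ → ℝ), Good d m f →
    ∃ a : Fin (d + 1) → ℝ, (∀ i, a i ∈ Set.Icc (0:ℝ) 1) ∧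
      ∀ t ∈ Set.Icc (0:ℝ) 1, m / ((d + 1)! : ℝ) * ∏ i, |t - a i| ≤ |f t|
  | 0, m, hm, f, hf => by
    obtain ⟨c, a, ha, hac, hle⟩ := exists_zero hf
    refine ⟨fun _ => a, fun _ => ha, fun t ht => le_trans ?_ (hle t ht)⟩
    have e1 : m / ((0 + 1)! : ℝ) * ∏ i : Fin (0 + 1), |t - a| = m * |t - a| := by simp
    rw [e1, ← hac]
    rcases le_total a t with h | h
    · have := hf.2 ha ht h
      simp only at this
      rw [abs_of_nonneg (sub_nonneg.2 h)]
      exact le_trans (by linarith) (le_abs_self _)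
    · have := hf.2 ht ha h
      simp only at this
      rw [abs_of_nonpos (sub_nonpos.2 h)]
      exact le_trans (by linarith) (neg_le_abs _)
  | d + 1, m, hm, f, hf => by
    obtain ⟨c, a, ha, hac, hle⟩ := exists_zero hf
    obtain ⟨g, hg, hfg⟩ := (hf.sub_const c).divide ha (by simp [hac])
    obtain ⟨b, hb, hb'⟩ := pointwise d (m / (d + 2)) (by positivity) g hg
    refine ⟨Fin.cons a b, fun i => ?_, fun t ht => le_trans ?_ (hle t ht)⟩
    · refine Fin.cases ?_ ?_ i
      · simpa using ha
      · simpa using hb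
    · rw [hfg t, abs_mul, Fin.prod_univ_succ]
      simp only [Fin.cons_zero, Fin.cons_succ]
      have := mul_le_mul_of_nonneg_left (hb' t ht) (abs_nonneg (t - a))
      refine le_trans (le_of_eq ?_) this
      rw [Nat.factorial_succ (d + 1)]
      push_cast
      field_simp
      ring

lemma extend : ∀ (d : ℕ) (m : ℝ) (fd : ℕ → ℝ → ℝ),
    (∀ k < d, ∀ x ∈ Set.Icc (0:ℝ) 1, HasDerivWithinAt (fd k) (fd (k + 1) x) (Set.Icc 0 1) x) →
    ContinuousOn (fd d) (Set.Icc 0 1) → MonotoneOn (fun t => fd d t - m * t) (Set.Icc 0 1) →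
    ∃ F, Good d m F ∧ Set.EqOn F (fd 0) (Set.Icc 0 1)
  | 0, m, fd, _, h2, h3 => by
    have he : Set.EqOn (Set.IccExtend (zero_le_one (α := ℝ)) ((Set.Icc 0 1).domRestrict (fd 0))) (fd 0) (Set.Icc 0 1) := by
      intro x hx
      rw [Set.IccExtend_of_mem _ _ hx]
      rfl
    refine ⟨_, ⟨(continuousOn_iff_continuous_domRestrict.1 h2).Icc_extend', ?_⟩, he⟩
    intro x hx y hy hxy
    have h4 := h3 hx hy hxy
    simp only at h4 ⊢
    rw [he hx, he hy]
    exact h4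
  | d + 1, m, fd, h1, h2, h3 => by
    obtain ⟨F, hF, hE⟩ := extend d m (fun k => fd (k + 1)) (fun k hk => h1 (k + 1) (by omega)) h2 h3
    have hFc := hF.continuous
    have hder : ∀ x, HasDerivAt (fun t => fd 0 0 + ∫ s in (0:ℝ)..t, F s) (F x) x := fun x =>
      (intervalIntegral.integral_hasDerivAt_right (hFc.intervalIntegrable _ _)
        (hFc.stronglyMeasurableAtFilter _ _) hFc.continuousAt).const_add _
    refine ⟨fun t => fd 0 0 + ∫ s in (0:ℝ)..t, F s, ⟨F, hder, hF⟩, ?_⟩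
    intro x hx
    have h0 := h1 0 (by omega)
    have := intervalIntegral.integral_eq_sub_of_hasDeriv_right_of_le (a := 0) (b := x) hx.1
      (f := fd 0) (f' := F) ?_ ?_ (hFc.intervalIntegrable _ _)
    · simp [this]
    · intro y hy
      exact ((h0 y ⟨hy.1, hy.2.trans hx.2⟩).continuousWithinAt).mono (Set.Icc_subset_Icc_right hx.2)
    · intro y hy
      have hy' : y ∈ Set.Icc (0:ℝ) 1 := ⟨hy.1.le, hy.2.le.trans hx.2⟩
      rw [hE hy']
      exact ((h0 y hy').hasDerivAt (Icc_mem_nhds hy.1 (hy.2.trans_le hx.2))).hasDerivWithinAt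

lemma integrable_log_sin_half (b x y : ℝ) :
    IntervalIntegrable (fun θ => Real.log (Real.sin (θ / 2 + b))) volume x y := by
  have h := (intervalIntegrable_log_sin (a := x / 2 + b) (b := y / 2 + b))
  have h1 := h.comp_add_right b
  have h2 := h1.comp_mul_left (c := (1 / 2 : ℝ))
  simp only [Function.comp_def] at h2
  convert h2 using 1
  · funext θ; congr 2; ring
  · field_simp; ring
  · field_simp; ring

lemma periodic_log_sin : Function.Periodic (fun x => Real.log (Real.sin x)) Real.pi := by
  intro x
  simp [Real.sin_add_pi, Real.log_neg_eq_log]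

lemma integral_log_sin_half (b : ℝ) :
    ∫ θ in (0:ℝ)..(2 * Real.pi), Real.log (Real.sin (θ / 2 + b)) = -(2 * Real.pi) * Real.log 2 := by
  have h := intervalIntegral.integral_comp_div_add (a := 0) (b := 2 * Real.pi) (fun x => Real.log (Real.sin x))
    (c := 2) (by norm_num) b
  rw [h]
  have h2 := periodic_log_sin.intervalIntegral_add_eq b 0
  have e : 2 * Real.pi / 2 + b = b + Real.pi := by ring
  rw [e, zero_div, zero_add, h2, zero_add, integral_log_sin_zero_pi, smul_eq_mul]
  ring

lemma integral_log_sin_two_pi :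
    ∫ θ in (0:ℝ)..(2 * Real.pi), Real.log (Real.sin θ) = -(2 * Real.pi) * Real.log 2 := by
  have h := periodic_log_sin.intervalIntegral_add_zsmul_eq 2 0
    (fun a b => intervalIntegrable_log_sin)
  simp only [zero_add, zsmul_eq_mul, integral_log_sin_zero_pi] at h
  push_cast at h
  rw [h]
  ring

lemma ae_sin_ne (b c : ℝ) (hc : c ≠ 0) : ∀ᵐ θ : ℝ, Real.sin (c * θ + b) ≠ 0 := by
  have : {θ : ℝ | Real.sin (c * θ + b) = 0} ⊆ Set.range (fun k : ℤ => (k * Real.pi - b) / c) := by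
    intro θ hθ
    obtain ⟨k, hk⟩ := Real.sin_eq_zero_iff.1 hθ
    refine ⟨k, ?_⟩
    simp only
    rw [hk]
    field_simp
    ring
  have h2 := ((Set.countable_range _).mono this).ae_notMem volume
  filter_upwards [h2] with θ hθ using hθ

/-- substitution `t = (1 + cos θ)/2` on the full circle. -/
lemma subst_half {g : ℝ → ℝ} (hg : Continuous g) :
    ∫ θ in (0:ℝ)..Real.pi, g ((1 + Real.cos θ) / 2) * |Real.sin θ| = 2 * ∫ t in (0:ℝ)..1, g t := by
  have hd : ∀ x : ℝ, HasDerivAt (fun θ => (1 + Real.cos θ) / 2) (-Real.sin x / 2) x := fun x =>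
    ((Real.hasDerivAt_cos x).const_add 1).div_const 2
  have h1 := intervalIntegral.integral_comp_mul_deriv (a := 0) (b := Real.pi)
    (f := fun θ => (1 + Real.cos θ) / 2) (f' := fun x => -Real.sin x / 2) (g := g)
    (fun x _ => hd x) (by fun_prop) hg
  simp only [Real.cos_zero, Real.cos_pi] at h1
  norm_num at h1
  rw [intervalIntegral.integral_symm 0 1] at h1
  have e : ∫ θ in (0:ℝ)..Real.pi, g ((1 + Real.cos θ) / 2) * |Real.sin θ| =
      ∫ θ in (0:ℝ)..Real.pi, (-2) * (g ((1 + Real.cos θ) / 2) * (-Real.sin θ / 2)) := by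
    apply intervalIntegral.integral_congr
    intro θ hθ
    rw [Set.uIcc_of_le Real.pi_pos.le] at hθ
    simp only
    rw [abs_of_nonneg (Real.sin_nonneg_of_mem_Icc hθ)]
    ring
  rw [e, intervalIntegral.integral_const_mul, h1]
  ring

lemma subst_full {g : ℝ → ℝ} (hg : Continuous g) :
    ∫ θ in (0:ℝ)..(2 * Real.pi), g ((1 + Real.cos θ) / 2) * |Real.sin θ| =
      4 * ∫ t in (0:ℝ)..1, g t := by
  have hc : Continuous fun θ => g ((1 + Real.cos θ) / 2) * |Real.sin θ| := by fun_prop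
  rw [← intervalIntegral.integral_add_adjacent_intervals (b := Real.pi)
    (hc.intervalIntegrable _ _) (hc.intervalIntegrable _ _), subst_half hg]
  have h2 := intervalIntegral.integral_comp_sub_left (a := 0) (b := Real.pi)
    (fun θ => g ((1 + Real.cos θ) / 2) * |Real.sin θ|) (2 * Real.pi)
  simp only [Real.cos_two_pi_sub, Real.sin_two_pi_sub, abs_neg] at h2
  rw [subst_half hg] at h2
  have e : 2 * Real.pi - Real.pi = Real.pi := by ring
  rw [e, sub_zero] at h2
  rw [← h2]
  ring

lemma poly_lower (n : ℕ) (p : ℝ) (hp : 0 < p) (a : Fin n → ℝ) (ha : ∀ i, a i ∈ Set.Icc (0:ℝ) 1) :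
    Real.pi / 4 * ((2:ℝ) ^ (-(2 * n : ℝ))) ^ p ≤ ∫ t in (0:ℝ)..1, (∏ i, |t - a i|) ^ p := by
  have hα : ∀ i, ∃ α : ℝ, a i = (1 + Real.cos α) / 2 := fun i =>
    ⟨Real.arccos (2 * a i - 1), by
      rw [Real.cos_arccos (by linarith [(ha i).1]) (by linarith [(ha i).2])]; ring⟩
  choose α hα using hα
  have hg : Continuous fun t : ℝ => (∏ i, |t - a i|) ^ p :=
    Continuous.rpow_const (by fun_prop) fun _ => Or.inr hp.le
  have hs := subst_full hg
  set L : ℝ → ℝ := fun θ => p * ∑ i, (Real.log (Real.sin (θ / 2 + α i / 2)) +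
    Real.log (Real.sin (θ / 2 + -(α i / 2)))) + Real.log (Real.sin θ) with hL
  set c : ℝ := -(2 * n * p + 1) * Real.log 2 with hc
  have hi1 : IntervalIntegrable (fun θ => ∑ i, (Real.log (Real.sin (θ / 2 + α i / 2)) +
    Real.log (Real.sin (θ / 2 + -(α i / 2))))) volume 0 (2 * Real.pi) := by
    have := IntervalIntegrable.sum (μ := volume) (a := 0) (b := 2 * Real.pi) Finset.univ
      (f := fun i θ => (Real.log (Real.sin (θ / 2 + α i / 2)) +
    Real.log (Real.sin (θ / 2 + -(α i / 2))))) fun i _ =>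
      (integrable_log_sin_half (α i / 2) _ _).add (integrable_log_sin_half (-(α i / 2)) _ _)
    exact this.congr (fun θ _ => by simp)
  have hi2 : IntervalIntegrable (fun θ => Real.log (Real.sin θ)) volume 0 (2 * Real.pi) :=
    intervalIntegrable_log_sin
  have hLi : IntervalIntegrable L volume 0 (2 * Real.pi) := (hi1.const_mul p).add hi2
  have hLint : ∫ θ in (0:ℝ)..(2 * Real.pi), L θ = 2 * Real.pi * c := by
    rw [hL, intervalIntegral.integral_add (hi1.const_mul p) hi2, intervalIntegral.integral_const_mul,
      intervalIntegral.integral_finsetSum, integral_log_sin_two_pi]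
    · have : ∀ i, ∫ θ in (0:ℝ)..(2 * Real.pi), (Real.log (Real.sin (θ / 2 + α i / 2)) +
        Real.log (Real.sin (θ / 2 + -(α i / 2)))) = -(4 * Real.pi) * Real.log 2 := by
        intro i
        rw [intervalIntegral.integral_add (integrable_log_sin_half _ _ _) (integrable_log_sin_half _ _ _),
          integral_log_sin_half, integral_log_sin_half]
        ring
      simp only [this, Finset.sum_const, Finset.card_univ, Fintype.card_fin, nsmul_eq_mul, hc]
      ring
    · intro i _
      exact (integrable_log_sin_half _ _ _).add (integrable_log_sin_half _ _ _)
  have hae : ∀ᵐ θ : ℝ, Real.exp c * (1 + L θ - c) ≤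
      (∏ i, |(1 + Real.cos θ) / 2 - a i|) ^ p * |Real.sin θ| := by
    have h1 : ∀ᵐ θ : ℝ, ∀ i, Real.sin (1 / 2 * θ + α i / 2) ≠ 0 :=
      ae_all_iff.2 fun i => ae_sin_ne _ _ (by norm_num)
    have h2 : ∀ᵐ θ : ℝ, ∀ i, Real.sin (1 / 2 * θ + -(α i / 2)) ≠ 0 :=
      ae_all_iff.2 fun i => ae_sin_ne _ _ (by norm_num)
    filter_upwards [h1, h2, ae_sin_ne 0 1 one_ne_zero] with θ k1 k2 k3
    simp only [one_mul, add_zero] at k3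
    have e2 : ∀ x : ℝ, 1 / 2 * θ + x = θ / 2 + x := fun x => by ring
    simp only [e2] at k1 k2
    have hfac : ∀ i, |(1 + Real.cos θ) / 2 - a i| = Real.exp (Real.log (Real.sin (θ / 2 + α i / 2)) +
        Real.log (Real.sin (θ / 2 + -(α i / 2)))) := by
      intro i
      rw [Real.exp_add, Real.exp_log_eq_abs (k1 i), Real.exp_log_eq_abs (k2 i), ← abs_mul, hα i]
      have := Real.cos_sub_cos θ (α i)
      have e3 : (1 + Real.cos θ) / 2 - (1 + Real.cos (α i)) / 2 =
          -(Real.sin (θ / 2 + α i / 2) * Real.sin (θ / 2 + -(α i / 2))) := by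
        have e4 : (θ + α i) / 2 = θ / 2 + α i / 2 := by ring
        have e5 : (θ - α i) / 2 = θ / 2 + -(α i / 2) := by ring
        rw [e4, e5] at this
        linarith
      rw [e3, abs_neg]
    have hw : (∏ i, |(1 + Real.cos θ) / 2 - a i|) ^ p * |Real.sin θ| = Real.exp (L θ) := by
      simp only [hfac]
      rw [← Real.exp_sum, ← Real.exp_mul, ← Real.exp_log_eq_abs k3, ← Real.exp_add, hL]
      simp only [mul_comm p]
    rw [hw]
    have := Real.add_one_le_exp (L θ - c)
    calc Real.exp c * (1 + L θ - c) ≤ Real.exp c * Real.exp (L θ - c) :=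
          mul_le_mul_of_nonneg_left (by linarith) (Real.exp_pos _).le
      _ = Real.exp (L θ) := by rw [← Real.exp_add]; congr 1; ring
  have hi3 : IntervalIntegrable (fun θ => Real.exp c * (1 + L θ - c)) volume 0 (2 * Real.pi) :=
    ((intervalIntegrable_const.add hLi).sub intervalIntegrable_const).const_mul _
  have hmono := intervalIntegral.integral_mono_ae (μ := volume) (a := 0) (b := 2 * Real.pi)
    Real.two_pi_pos.le hi3 (g := fun θ => (∏ i, |(1 + Real.cos θ) / 2 - a i|) ^ p * |Real.sin θ|)
    (by
      apply Continuous.intervalIntegrable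
      exact (hg.comp (by fun_prop : Continuous fun θ => (1 + Real.cos θ) / 2)).mul (by fun_prop)) hae
  rw [hs, intervalIntegral.integral_const_mul, intervalIntegral.integral_sub
    (intervalIntegrable_const.add hLi) intervalIntegrable_const, intervalIntegral.integral_add
    intervalIntegrable_const hLi, hLint] at hmono
  simp only [intervalIntegral.integral_const, smul_eq_mul, sub_zero, mul_one] at hmono
  have hexp : Real.exp c = ((2:ℝ) ^ (-(2 * n : ℝ))) ^ p / 2 := by
    rw [← Real.rpow_mul (by norm_num), Real.rpow_def_of_pos (by norm_num)]
    have : Real.exp (Real.log 2) = (2:ℝ) := Real.exp_log (by norm_num)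
    have h5 : c = Real.log 2 * (-(2 * (n:ℝ)) * p) - Real.log 2 := by rw [hc]; ring
    rw [h5, Real.exp_sub, this]
  rw [hexp] at hmono
  linarith

lemma core {d : ℕ} {p m : ℝ} {F : ℝ → ℝ} (hp : 0 < p) (hm : 0 < m) (hF : Good d m F) :
    m / ((d + 1)! : ℝ) * (2:ℝ) ^ (-(2 * (d + 1 : ℕ) : ℝ)) * (Real.pi / 4) ^ (1 / p) ≤ Lp p 0 1 F := by
  obtain ⟨a, ha, hle⟩ := pointwise d m hm.le F hF
  have hFc := hF.continuous
  have h1 := poly_lower (d + 1) p hp a ha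
  have hK : 0 < m / ((d + 1)! : ℝ) := by positivity
  set K := m / ((d + 1)! : ℝ)
  have h2 : K ^ p * ∫ t in (0:ℝ)..1, (∏ i, |t - a i|) ^ p ≤ ∫ t in (0:ℝ)..1, |F t| ^ p := by
    rw [← intervalIntegral.integral_const_mul]
    have hg : Continuous fun t : ℝ => (∏ i, |t - a i|) ^ p :=
      Continuous.rpow_const (by fun_prop) fun _ => Or.inr hp.le
    have hg' : Continuous fun t : ℝ => |F t| ^ p :=
      Continuous.rpow_const (by fun_prop) fun _ => Or.inr hp.le
    apply intervalIntegral.integral_mono_on zero_le_one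
    · exact (hg.const_mul _).intervalIntegrable _ _
    · exact hg'.intervalIntegrable _ _
    · intro t ht
      have hP : 0 ≤ ∏ i, |t - a i| := Finset.prod_nonneg fun _ _ => abs_nonneg _
      rw [← Real.mul_rpow hK.le hP]
      exact Real.rpow_le_rpow (mul_nonneg hK.le hP) (hle t ht) hp.le
  have h3 : K ^ p * (Real.pi / 4 * ((2:ℝ) ^ (-(2 * (d + 1 : ℕ) : ℝ))) ^ p) ≤ ∫ t in (0:ℝ)..1, |F t| ^ p :=
    le_trans (mul_le_mul_of_nonneg_left h1 (by positivity)) h2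
  have hpi := Real.pi_pos
  have h4 := Real.rpow_le_rpow (by positivity) h3 (show 0 ≤ 1 / p by positivity)
  unfold _root_.Lp
  refine le_trans (le_of_eq ?_) h4
  rw [Real.mul_rpow (by positivity) (by positivity), Real.mul_rpow (by positivity) (by positivity),
    ← Real.rpow_mul hK.le, ← Real.rpow_mul (x := (2:ℝ) ^ (-(2 * (d + 1 : ℕ) : ℝ))) (by positivity), mul_one_div_cancel hp.ne',
    Real.rpow_one, Real.rpow_one]
  ring

lemma key_pos {d : ℕ} {p m : ℝ} {fd : ℕ → ℝ → ℝ} (hp : 0 < p) (hm : 0 < m) (h : IsDn (d + 1) 0 1 fd)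
    (hle : ∀ t ∈ Set.Ioo (0:ℝ) 1, m ≤ fd (d + 1) t) :
    m / ((d + 1)! : ℝ) * (2:ℝ) ^ (-(2 * (d + 1 : ℕ) : ℝ)) * (Real.pi / 4) ^ (1 / p) ≤
      Lp p 0 1 (fd 0) := by
  obtain ⟨h1, h2, h3⟩ := h
  simp only [Nat.add_sub_cancel] at h2 h3
  have hder : ∀ x ∈ Set.Ioo (0:ℝ) 1, HasDerivAt (fun t => fd d t - m * t) (fd (d + 1) x - m) x := by
    intro x hx
    have := (h3 x hx).sub ((hasDerivAt_id x).const_mul m)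
    simpa using! this
  have hmono : MonotoneOn (fun t => fd d t - m * t) (Set.Icc 0 1) := by
    have hcon : ContinuousOn (fun t => fd d t - m * t) (Set.Icc 0 1) := h2.sub (by fun_prop)
    apply monotoneOn_of_deriv_nonneg (convex_Icc _ _) hcon
    · rw [interior_Icc]
      exact fun x hx => (hder x hx).differentiableAt.differentiableWithinAt
    · rw [interior_Icc]
      intro x hx
      rw [(hder x hx).deriv]
      linarith [hle x hx]
  obtain ⟨F, hF, hE⟩ := extend d m fd (fun k hk => h1 k (by omega)) h2 hmono
  have := core hp hm hF
  refine this.trans (le_of_eq ?_)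
  unfold _root_.Lp
  congr 1
  apply intervalIntegral.integral_congr
  intro x hx
  rw [Set.uIcc_of_le zero_le_one] at hx
  simp only
  rw [hE hx]

lemma key {n : ℕ} (hn : 1 ≤ n) {p : ℝ} {fd : ℕ → ℝ → ℝ} (hp : 0 < p) (hm : 0 < mIoo n 0 1 fd)
    (h : IsDn n 0 1 fd) :
    mIoo n 0 1 fd / (n ! : ℝ) * (2:ℝ) ^ (-(2 * n : ℝ)) * (Real.pi / 4) ^ (1 / p) ≤
      Lp p 0 1 (fd 0) := by
  obtain ⟨d, rfl⟩ : ∃ d, n = d + 1 := ⟨n - 1, by omega⟩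
  have hle : ∀ t ∈ Set.Ioo (0:ℝ) 1, mIoo (d + 1) 0 1 fd ≤ |fd (d + 1) t| := fun t ht =>
    csInf_le ⟨0, by rintro _ ⟨x, _, rfl⟩; exact abs_nonneg _⟩ ⟨t, ht, rfl⟩
  set m := mIoo (d + 1) 0 1 fd
  have hne : ∀ t ∈ Set.Ioo (0:ℝ) 1, fd (d + 1) t ≠ 0 := fun t ht h0 => by
    have := hle t ht
    rw [h0, abs_zero] at this
    linarith
  have hD := hasDerivWithinAt_forall_lt_or_forall_gt_of_forall_ne (convex_Ioo (0:ℝ) 1)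
    (f := fd d) (f' := fd (d + 1)) (fun x hx => (h.2.2 x hx).hasDerivWithinAt) hne
  rcases hD with hD | hD
  · have h' : IsDn (d + 1) 0 1 (fun k t => -fd k t) :=
      ⟨fun k hk x hx => (h.1 k hk x hx).neg, h.2.1.neg, fun x hx => (h.2.2 x hx).neg⟩
    have := key_pos hp hm h' fun t ht => by
      have h4 := hle t ht
      rwa [abs_of_neg (hD t ht)] at h4
    refine this.trans (le_of_eq ?_)
    unfold _root_.Lp
    simp only [abs_neg]
  · refine key_pos hp hm h fun t ht => ?_
    have h4 := hle t ht
    rwa [abs_of_pos (hD t ht)] at h4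

/-- The extremal polynomial on `[0,1]`. -/
noncomputable def QU (n : ℕ) : Polynomial ℝ :=
  C (((2:ℝ) ^ (2 * n))⁻¹) * (Polynomial.Chebyshev.U ℝ n).comp (C 2 * X + C (-1))

lemma QU_natDegree (n : ℕ) : (QU n).natDegree = n := by
  unfold QU
  rw [natDegree_C_mul (by positivity), natDegree_comp, natDegree_linear (by norm_num)]
  simp

lemma QU_lead (n : ℕ) : (QU n).leadingCoeff = 1 := by
  unfold QU
  rw [leadingCoeff_mul, leadingCoeff_C, leadingCoeff_comp (by rw [natDegree_linear (by norm_num)]; norm_num),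
    leadingCoeff_linear (by norm_num)]
  simp only [Chebyshev.leadingCoeff_U_natCast, Chebyshev.natDegree_U_natCast]
  rw [← pow_add, two_mul]
  field_simp

lemma QU_deriv (n : ℕ) : derivative^[n] (QU n) = C (n ! : ℝ) := by
  ext k
  rw [coeff_iterate_derivative, coeff_C]
  split_ifs with h
  · subst h
    have : (QU n).coeff n = 1 := by
      have := QU_lead n
      rwa [leadingCoeff, QU_natDegree] at this
    rw [zero_add, Nat.descFactorial_self, this]
    simp
  · rw [coeff_eq_zero_of_natDegree_lt (by rw [QU_natDegree]; omega)]
    simp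

lemma integral_abs_sin_mul (N : ℕ) (hN : 0 < N) :
    ∫ θ in (0:ℝ)..Real.pi, |Real.sin (N * θ)| = 2 := by
  have hN' : (N:ℝ) ≠ 0 := by positivity
  have hper : Function.Periodic (fun x => |Real.sin x|) Real.pi := fun x => by
    simp [Real.sin_add_pi]
  have h := hper.intervalIntegral_add_zsmul_eq N 0
    (fun a b => (by fun_prop : Continuous fun x => |Real.sin x|).intervalIntegrable _ _)
  have h0 : ∫ θ in (0:ℝ)..Real.pi, |Real.sin θ| = 2 := by
    have h5 : ∫ θ in (0:ℝ)..Real.pi, Real.sin θ = 2 := by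
      rw [integral_sin]; norm_num
    rw [← h5]
    apply intervalIntegral.integral_congr
    intro θ hθ
    rw [Set.uIcc_of_le Real.pi_pos.le] at hθ
    exact abs_of_nonneg (Real.sin_nonneg_of_mem_Icc hθ)
  have h2 := intervalIntegral.integral_comp_mul_left (a := 0) (b := Real.pi)
    (fun x => |Real.sin x|) hN'
  rw [h2]
  simp only [zero_add, zsmul_eq_mul, h0] at h
  push_cast at h
  rw [mul_zero, h, smul_eq_mul]
  field_simp

lemma QU_integral (n : ℕ) : ∫ t in (0:ℝ)..1, |(QU n).eval t| = ((2:ℝ) ^ (2 * n))⁻¹ := by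
  have h := subst_half (g := fun t => |(QU n).eval t|) (by fun_prop)
  have e : ∀ θ : ℝ, |(QU n).eval ((1 + Real.cos θ) / 2)| * |Real.sin θ| =
      ((2:ℝ) ^ (2 * n))⁻¹ * |Real.sin ((n + 1 : ℕ) * θ)| := by
    intro θ
    have := Polynomial.Chebyshev.U_real_cos θ n
    push_cast at this ⊢
    rw [← this, ← abs_mul]
    unfold QU
    simp only [eval_mul, eval_C, eval_comp, eval_add, eval_X]
    have e3 : 2 * ((1 + Real.cos θ) / 2) + -1 = Real.cos θ := by ring
    rw [e3, mul_assoc, abs_mul, abs_of_pos (by positivity : (0:ℝ) < ((2:ℝ) ^ (2 * n))⁻¹)]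
  simp only [e] at h
  rw [intervalIntegral.integral_const_mul, integral_abs_sin_mul _ (Nat.succ_pos n)] at h
  linarith

lemma Lp_le {p M : ℝ} (hp0 : 0 < p) (hp1 : p < 1) (hM : 0 < M) {g : ℝ → ℝ} (hg : Continuous g)
    (h : ∫ t in (0:ℝ)..1, |g t| = M) : Lp p 0 1 g ≤ M := by
  have hg' : Continuous fun t : ℝ => |g t| ^ p :=
    Continuous.rpow_const (by fun_prop) fun _ => Or.inr hp0.le
  have h1 : (∫ t in (0:ℝ)..1, |g t| ^ p * M ^ (1 - p)) ≤
      ∫ t in (0:ℝ)..1, (p * |g t| + (1 - p) * M) := by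
    apply intervalIntegral.integral_mono_on zero_le_one
    · exact (hg'.mul_const _).intervalIntegrable _ _
    · apply Continuous.intervalIntegrable; fun_prop
    · intro t _
      exact Real.geom_mean_le_arith_mean2_weighted hp0.le (by linarith) (abs_nonneg _) hM.le (by ring)
  rw [intervalIntegral.integral_mul_const, intervalIntegral.integral_add
    (by apply Continuous.intervalIntegrable; fun_prop) intervalIntegrable_const,
    intervalIntegral.integral_const_mul, h] at h1
  simp only [intervalIntegral.integral_const, sub_zero, smul_eq_mul, one_mul] at h1
  have h2 : (∫ t in (0:ℝ)..1, |g t| ^ p) * M ^ (1 - p) ≤ M ^ p * M ^ (1 - p) := by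
    rw [← Real.rpow_add hM]
    simp only [add_sub_cancel, Real.rpow_one]
    linarith
  have h3 := le_of_mul_le_mul_right h2 (by positivity)
  have h0 : 0 ≤ ∫ t in (0:ℝ)..1, |g t| ^ p :=
    intervalIntegral.integral_nonneg zero_le_one fun t _ => by positivity
  have h4 := Real.rpow_le_rpow h0 h3 (show 0 ≤ 1 / p by positivity)
  rwa [← Real.rpow_mul hM.le, mul_one_div_cancel hp0.ne', Real.rpow_one] at h4

lemma QU_isDn (n : ℕ) (hn : 1 ≤ n) : IsDn n 0 1 (fun k t => (derivative^[k] (QU n)).eval t) := by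
  have hd : ∀ k x, HasDerivAt (fun t => (derivative^[k] (QU n)).eval t)
      ((derivative^[k + 1] (QU n)).eval x) x := by
    intro k x
    rw [Function.iterate_succ_apply']
    exact Polynomial.hasDerivAt _ x
  refine ⟨fun k _ x _ => (hd k x).hasDerivWithinAt, Polynomial.continuousOn _, fun x _ => ?_⟩
  have := hd (n - 1) x
  rwa [Nat.sub_add_cancel hn] at this

lemma QU_mIoo (n : ℕ) : mIoo n 0 1 (fun k t => (derivative^[k] (QU n)).eval t) = (n ! : ℝ) := by
  unfold mIoo
  simp only [QU_deriv, eval_C]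
  rw [Set.Nonempty.image_const (by simp)]
  simp

/-- For `0 < p < 1`, one has `2^{2n} n! ≤ C(n,p) ≤ 2^{2n-1} n! (8/π)^{1/p}`. -/
theorem stmt17 (n : ℕ) (hn : 1 ≤ n) (p : ℝ) (hp0 : 0 < p) (hp1 : p < 1) :
    2 ^ (2 * n) * (n ! : ℝ) ≤ Cnp n p ∧
      Cnp n p ≤ 2 ^ (2 * n - 1) * (n ! : ℝ) * (8 / Real.pi) ^ (1 / p) := by
  have hpi := Real.pi_pos
  have hup : ∀ c ∈ { c | ∃ fd : ℕ → ℝ → ℝ, IsDn n 0 1 fd ∧ (∃ x ∈ Set.Icc (0:ℝ) 1, fd 0 x ≠ 0) ∧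
      c = mIoo n 0 1 fd / Lp p 0 1 (fd 0) },
      c ≤ 2 ^ (2 * n - 1) * (n ! : ℝ) * (8 / Real.pi) ^ (1 / p) := by
    rintro c ⟨fd, h, -, rfl⟩
    have hm0 : 0 ≤ mIoo n 0 1 fd := Real.sInf_nonneg (by rintro _ ⟨x, _, rfl⟩; exact abs_nonneg _)
    rcases hm0.eq_or_lt with hm | hm
    · rw [← hm, zero_div]; positivity
    have hk := key hn hp0 hm h
    set m := mIoo n 0 1 fd
    have e1 : (2:ℝ) ^ (-(2 * n : ℝ)) = ((2:ℝ) ^ (2 * n))⁻¹ := by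
      rw [Real.rpow_neg (by norm_num)]
      congr 1
      exact_mod_cast Real.rpow_natCast 2 (2 * n)
    have e2 : (8 / Real.pi) ^ (1 / p) = 2 ^ (1 / p) * ((Real.pi / 4) ^ (1 / p))⁻¹ := by
      rw [← Real.inv_rpow (by positivity), ← Real.mul_rpow (by positivity) (by positivity)]
      congr 1
      field_simp
      norm_num
    have e3 : (2:ℝ) ^ (2 * n) = 2 ^ (2 * n - 1) * 2 := by
      rw [← pow_succ]; congr 1; omega
    have e4 : (2:ℝ) ≤ 2 ^ (1 / p) := by
      conv_lhs => rw [← Real.rpow_one 2]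
      apply Real.rpow_le_rpow_of_exponent_le (by norm_num)
      rw [le_div_iff₀ hp0]; linarith
    set R := (Real.pi / 4) ^ (1 / p)
    have hR : 0 < R := by positivity
    rw [e1] at hk
    have hLpos : 0 < m / (n ! : ℝ) * ((2:ℝ) ^ (2 * n))⁻¹ * R := by positivity
    calc m / Lp p 0 1 (fd 0) ≤ m / (m / (n ! : ℝ) * ((2:ℝ) ^ (2 * n))⁻¹ * R) :=
          div_le_div_of_nonneg_left hm0 hLpos hk
      _ = 2 ^ (2 * n - 1) * (n ! : ℝ) * (2 * R⁻¹) := by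
          rw [e3]; field_simp
      _ ≤ _ := by
          rw [e2]; gcongr
  have hmem : (n ! : ℝ) / Lp p 0 1 (fun t => (QU n).eval t) ∈ { c | ∃ fd : ℕ → ℝ → ℝ, IsDn n 0 1 fd ∧
      (∃ x ∈ Set.Icc (0:ℝ) 1, fd 0 x ≠ 0) ∧ c = mIoo n 0 1 fd / Lp p 0 1 (fd 0) } := by
    refine ⟨fun k t => (derivative^[k] (QU n)).eval t, QU_isDn n hn, ?_, ?_⟩
    · by_contra! hcon
      have h := QU_integral n
      have h0 : ∫ t in (0:ℝ)..1, |(QU n).eval t| = ∫ t in (0:ℝ)..1, (0:ℝ) := by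
        apply intervalIntegral.integral_congr
        intro t ht
        rw [Set.uIcc_of_le zero_le_one] at ht
        have := hcon t ht
        simp only [Function.iterate_zero, id_eq] at this
        simp [this]
      rw [h0] at h
      have : (0:ℝ) < ((2:ℝ) ^ (2 * n))⁻¹ := by positivity
      simp only [intervalIntegral.integral_zero] at h
      linarith
    · rw [QU_mIoo]
      rfl
  refine ⟨le_trans ?_ (le_csSup ⟨_, hup⟩ hmem), csSup_le ⟨_, hmem⟩ hup⟩
  have hM : (0:ℝ) < ((2:ℝ) ^ (2 * n))⁻¹ := by positivity
  have hL := Lp_le hp0 hp1 hM (by fun_prop : Continuous fun t => (QU n).eval t) (QU_integral n)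
  have hm : 0 < mIoo n 0 1 (fun k t => (derivative^[k] (QU n)).eval t) := by
    rw [QU_mIoo]; positivity
  have hk := key hn hp0 hm (QU_isDn n hn)
  simp only [Function.iterate_zero, id_eq] at hk
  have hpos : 0 < Lp p 0 1 (fun t => (QU n).eval t) := lt_of_lt_of_le (by positivity) hk
  rw [le_div_iff₀ hpos]
  calc 2 ^ (2 * n) * (n ! : ℝ) * Lp p 0 1 (fun t => (QU n).eval t)
      ≤ 2 ^ (2 * n) * (n ! : ℝ) * ((2:ℝ) ^ (2 * n))⁻¹ := by gcongr
    _ = (n ! : ℝ) := by field_simp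
end
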